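/- arXiv:1807.06345 — 7 statements merged into one kernel-verified Lean document; each statement's English description precedes it below -/
import Mathlib

section
/- For any four jointly distributed finite random variables X1, X2, X3, X4, the Zhang–Yeung non-Shannon inequality holds: -H(X1) - H(X2) - (1/2)H(X3) + (3/2)H(X1X2) + (3/2)H(X1X3) + (1/2)H(X1X4) + (3/2)H(X2X3) + (1/2)H(X2X4) - (1/2)H(X3X4) - 2H(X1X2X3) - (1/2)H(X1X2X4) ≥ 0, where H denotes the Shannon entropy and juxtaposition denotes the entropy of the joint random variable. -/
open MeasureTheory ProbabilityTheory

/-- Shannon entropy of a finite-valued random variable `X` under the measure `μ`. -/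
noncomputable def entH {Ω E : Type*} [MeasurableSpace Ω] [Fintype E]
    (μ : Measure Ω) (X : Ω → E) : ℝ :=
  ∑ e : E, Real.negMulLog (μ (X ⁻¹' {e})).toReal

/-- Mutual information `I(X : Y)`. -/
noncomputable def mutInf {Ω E F : Type*} [MeasurableSpace Ω] [Fintype E] [Fintype F]
    (μ : Measure Ω) (X : Ω → E) (Y : Ω → F) : ℝ :=
  entH μ X + entH μ Y - entH μ (fun ω => (X ω, Y ω))

/-- Conditional Shannon entropy `H(X | Y)`. -/
noncomputable def condEnt {Ω E F : Type*} [MeasurableSpace Ω] [Fintype E] [Fintype F]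
    (μ : Measure Ω) (X : Ω → E) (Y : Ω → F) : ℝ :=
  entH μ (fun ω => (X ω, Y ω)) - entH μ Y

/-- Conditional mutual information `I(X : Y | Z)`. -/
noncomputable def condMutInf {Ω E F G : Type*} [MeasurableSpace Ω]
    [Fintype E] [Fintype F] [Fintype G]
    (μ : Measure Ω) (X : Ω → E) (Y : Ω → F) (Z : Ω → G) : ℝ :=
  entH μ (fun ω => (X ω, Z ω)) + entH μ (fun ω => (Y ω, Z ω))
    - entH μ (fun ω => (X ω, Y ω, Z ω)) - entH μ Z

/-!
Write `I` for (conditional) mutual information. Ingleton's inequality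
`I(X : Y) ≤ I(X : Y | Z) + I(X : Y | W) + I(Z : W)` holds up to the error `I(Z : W | X, Y)`.
Let `V` be a copy of `X₃` that has the same joint law with `(X₁, X₂)` and is independent of
`(X₃, X₄)` given `(X₁, X₂)`. Ingleton's inequality then holds for `X₁, X₂, X₃, V` and for
`X₁, X₂, X₄, V`. In the sum of the two, submodularity and data processing bound
`I(X₃ : V) + I(X₄ : V)` by `I(X₃ : X₄) + I(X₁, X₂ : V)`, and `V` may be replaced by `X₃` in every
remaining term, since there it only occurs together with `X₁, X₂`.
-/

section Kernel

variable {α β γ : Type*} [MeasurableSpace α] [MeasurableSpace β] [MeasurableSpace γ]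
  {ρ : Measure α} [SFinite ρ] {κ : Kernel α β} {η : Kernel α γ}

lemma compProd_real_singleton [MeasurableSingletonClass α] [MeasurableSingletonClass β]
    [IsSFiniteKernel κ] (a : α) (b : β) :
    (ρ ⊗ₘ κ).real {(a, b)} = ρ.real {a} * (κ a).real {b} := by
  rw [← Set.singleton_prod_singleton, measureReal_def,
    Measure.compProd_apply_prod (measurableSet_singleton _) (measurableSet_singleton _)]
  simp [measureReal_def]

lemma map_compProd_prod_fst [IsSFiniteKernel κ] [IsMarkovKernel η] :
    (ρ ⊗ₘ (κ ×ₖ η)).map (fun t => (t.1, t.2.1)) = ρ ⊗ₘ κ := by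
  conv_rhs => rw [← Kernel.fst_prod κ η, Kernel.fst_eq, Measure.compProd_map measurable_fst]
  rfl

lemma map_compProd_prod_snd [IsMarkovKernel κ] [IsSFiniteKernel η] :
    (ρ ⊗ₘ (κ ×ₖ η)).map (fun t => (t.1, t.2.2)) = ρ ⊗ₘ η := by
  conv_rhs => rw [← Kernel.snd_prod κ η, Kernel.snd_eq, Measure.compProd_map measurable_snd]
  rfl

end Kernel

lemma sub_mul_div_le_mul_log {a b c p : ℝ} (hp : 0 ≤ p) (ha : p ≤ a) (hb : p ≤ b) (hc : p ≤ c) :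
    p - a * b / c ≤ p * (Real.log p + Real.log c - Real.log a - Real.log b) := by
  rcases hp.eq_or_lt with rfl | hp
  · simpa using div_nonneg (mul_nonneg ha hb) hc
  have ha := hp.trans_le ha
  have hb := hp.trans_le hb
  have hc := hp.trans_le hc
  have hlog : Real.log (a * b / (p * c)) ≤ a * b / (p * c) - 1 :=
    Real.log_le_sub_one_of_pos (by positivity)
  rw [Real.log_div (by positivity) (by positivity), Real.log_mul ha.ne' hb.ne',
    Real.log_mul hp.ne' hc.ne'] at hlog
  have hmul := mul_le_mul_of_nonneg_left hlog hp.le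
  have hcancel : p * (a * b / (p * c) - 1) = a * b / c - p := by field_simp
  linarith

section Entropy

variable {Ω Ω' E F G : Type*} [MeasurableSpace Ω] [MeasurableSpace Ω']
  [Fintype E] [Fintype F] [Fintype G] {μ : Measure Ω} {ν : Measure Ω'}

lemma nonempty_preimage_singleton_of_negMulLog_ne_zero {S : Type*} {X : Ω → S} {x : S}
    (hx : Real.negMulLog (μ (X ⁻¹' {x})).toReal ≠ 0) : (X ⁻¹' {x}).Nonempty := by
  contrapose! hx
  simp [hx]

lemma entH_congr {X : Ω → E} {Y : Ω → F} (h : ∀ ω ω', X ω = X ω' ↔ Y ω = Y ω') :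
    entH μ X = entH μ Y := by
  have fiber_eq (ω : Ω) : X ⁻¹' {X ω} = Y ⁻¹' {Y ω} := Set.ext fun ω' => h ω' ω
  refine Finset.sum_bij_ne_zero
    (fun x _ hx => Y (nonempty_preimage_singleton_of_negMulLog_ne_zero hx).some)
    (fun _ _ _ => Finset.mem_univ _) (fun x _ hx x' _ hx' hY => ?_) (fun y _ hy => ?_)
    (fun x _ hx => ?_)
  · have hX := (nonempty_preimage_singleton_of_negMulLog_ne_zero hx).some_mem
    have hX' := (nonempty_preimage_singleton_of_negMulLog_ne_zero hx').some_mem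
    exact hX.symm.trans (((h _ _).2 hY).trans hX')
  · obtain ⟨ω, rfl⟩ := nonempty_preimage_singleton_of_negMulLog_ne_zero hy
    rw [← fiber_eq] at hy
    exact ⟨X ω, Finset.mem_univ _, hy, (h _ _).1 (Set.Nonempty.some_mem (s := X ⁻¹' {X ω}) _)⟩
  · have hX : X _ = x := (nonempty_preimage_singleton_of_negMulLog_ne_zero hx).some_mem
    rw [← fiber_eq, hX]

lemma entH_prodMk_comm (X : Ω → E) (Y : Ω → F) :
    entH μ (fun ω => (X ω, Y ω)) = entH μ (fun ω => (Y ω, X ω)) :=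
  entH_congr (by grind)

lemma entH_prodMk_rotate (X : Ω → E) (Y : Ω → F) (Z : Ω → G) :
    entH μ (fun ω => (X ω, Y ω, Z ω)) = entH μ (fun ω => (Y ω, Z ω, X ω)) :=
  entH_congr (by grind)

variable [MeasurableSpace E] [MeasurableSingletonClass E]

lemma entH_eq_of_identDistrib {X : Ω → E} {X' : Ω' → E} (h : IdentDistrib X X' μ ν) :
    entH μ X = entH ν X' := by
  simp only [entH, h.measure_mem_eq (measurableSet_singleton _)]

open Classical in
lemma measureReal_preimage_comp_singleton {S : Type*} [IsFiniteMeasure μ] {X : Ω → E}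
    (hX : AEMeasurable X μ) (f : E → S) (y : S) :
    μ.real ((fun ω => f (X ω)) ⁻¹' {y}) = ∑ x with f x = y, μ.real (X ⁻¹' {x}) := calc
  _ = (μ.map X).real ↑({x | f x = y} : Finset E) := by
    rw [map_measureReal_apply_of_aemeasurable hX .of_discrete]
    congr 1
    ext
    simp
  _ = ∑ x with f x = y, μ.real (X ⁻¹' {x}) := by
    rw [← sum_measureReal_singleton]
    simp only [map_measureReal_apply_of_aemeasurable hX (measurableSet_singleton _)]

lemma entH_comp_eq_neg_sum [IsFiniteMeasure μ] {X : Ω → E} (hX : AEMeasurable X μ)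
    (f : E → F) :
    entH μ (fun ω => f (X ω)) =
      -∑ x, μ.real (X ⁻¹' {x}) * Real.log (μ.real ((fun ω => f (X ω)) ⁻¹' {f x})) := by
  classical
  rw [← Finset.sum_fiberwise (s := Finset.univ) (g := f), ← Finset.sum_neg_distrib]
  refine Finset.sum_congr rfl fun y _ => ?_
  rw [Finset.sum_congr rfl fun x hx => by rw [(Finset.mem_filter.1 hx).2],
    ← Finset.sum_mul, ← measureReal_preimage_comp_singleton hX, Real.negMulLog, neg_mul,
    measureReal_def]

variable [MeasurableSpace F] [MeasurableSingletonClass F]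

lemma mutInf_eq_of_identDistrib {X : Ω → E} {Y : Ω → F} {X' : Ω' → E} {Y' : Ω' → F}
    (h : IdentDistrib (fun ω => (X ω, Y ω)) (fun ω => (X' ω, Y' ω)) μ ν) :
    mutInf μ X Y = mutInf ν X' Y' := by
  have hX : IdentDistrib X X' μ ν := h.comp measurable_fst
  have hY : IdentDistrib Y Y' μ ν := h.comp measurable_snd
  rw [mutInf, mutInf, entH_eq_of_identDistrib h, entH_eq_of_identDistrib hX,
    entH_eq_of_identDistrib hY]

variable [MeasurableSpace G] [MeasurableSingletonClass G]

lemma condMutInf_eq_of_identDistrib {X : Ω → E} {Y : Ω → F} {Z : Ω → G}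
    {X' : Ω' → E} {Y' : Ω' → F} {Z' : Ω' → G}
    (h : IdentDistrib (fun ω => (X ω, Y ω, Z ω)) (fun ω => (X' ω, Y' ω, Z' ω)) μ ν) :
    condMutInf μ X Y Z = condMutInf ν X' Y' Z' := by
  have hXZ : IdentDistrib (fun ω => (X ω, Z ω)) (fun ω => (X' ω, Z' ω)) μ ν :=
    h.comp (measurable_fst.prodMk (measurable_snd.comp measurable_snd))
  have hYZ : IdentDistrib (fun ω => (Y ω, Z ω)) (fun ω => (Y' ω, Z' ω)) μ ν :=
    h.comp measurable_snd
  have hZ : IdentDistrib Z Z' μ ν := hYZ.comp measurable_snd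
  rw [condMutInf, condMutInf, entH_eq_of_identDistrib h, entH_eq_of_identDistrib hXZ,
    entH_eq_of_identDistrib hYZ, entH_eq_of_identDistrib hZ]

section CondMutInf

variable [IsFiniteMeasure μ] {X : Ω → E} {Y : Ω → F} {Z : Ω → G}

lemma condMutInf_eq_sum (hX : AEMeasurable X μ) (hY : AEMeasurable Y μ) (hZ : AEMeasurable Z μ) :
    condMutInf μ X Y Z = ∑ x, ∑ y, ∑ z, μ.real ((fun ω => (X ω, Y ω, Z ω)) ⁻¹' {(x, y, z)}) *
      (Real.log (μ.real ((fun ω => (X ω, Y ω, Z ω)) ⁻¹' {(x, y, z)}))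
        + Real.log (μ.real (Z ⁻¹' {z}))
        - Real.log (μ.real ((fun ω => (X ω, Z ω)) ⁻¹' {(x, z)}))
        - Real.log (μ.real ((fun ω => (Y ω, Z ω)) ⁻¹' {(y, z)}))) := by
  have hXYZ : AEMeasurable (fun ω => (X ω, Y ω, Z ω)) μ := hX.prodMk (hY.prodMk hZ)
  rw [condMutInf, entH_comp_eq_neg_sum hXYZ (fun t => (t.1, t.2.2)),
    entH_comp_eq_neg_sum hXYZ (fun t => t.2), entH_comp_eq_neg_sum hXYZ (fun t => t),
    entH_comp_eq_neg_sum hXYZ (fun t => t.2.2)]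
  simp only [Fintype.sum_prod_type, mul_add, mul_sub, Finset.sum_add_distrib,
    Finset.sum_sub_distrib]
  ring

lemma sum_measureReal_preimage_prodMk_singleton (hX : AEMeasurable X μ) {S : Type*} (Y : Ω → S)
    (y : S) : ∑ x, μ.real ((fun ω => (X ω, Y ω)) ⁻¹' {(x, y)}) = μ.real (Y ⁻¹' {y}) := by
  have hX' : AEMeasurable X (μ.restrict (Y ⁻¹' {y})) := hX.restrict
  have law_singleton (x : E) : ((μ.restrict (Y ⁻¹' {y})).map X).real {x} =
      μ.real ((fun ω => (X ω, Y ω)) ⁻¹' {(x, y)}) := by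
    rw [map_measureReal_apply_of_aemeasurable hX' (measurableSet_singleton x),
      measureReal_restrict_apply₀ (hX'.nullMeasurable (measurableSet_singleton x)),
      ← Set.singleton_prod_singleton, Set.mk_preimage_prod]
  simp only [← law_singleton]
  rw [sum_measureReal_singleton, Finset.coe_univ,
    map_measureReal_apply_of_aemeasurable hX' .univ, Set.preimage_univ,
    measureReal_restrict_apply_univ]

lemma condMutInf_nonneg (hX : AEMeasurable X μ) (hY : AEMeasurable Y μ) (hZ : AEMeasurable Z μ) :
    0 ≤ condMutInf μ X Y Z := by
  set p := fun x y z => μ.real ((fun ω => (X ω, Y ω, Z ω)) ⁻¹' {(x, y, z)}) with hp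
  set a := fun x z => μ.real ((fun ω => (X ω, Z ω)) ⁻¹' {(x, z)}) with ha
  set b := fun y z => μ.real ((fun ω => (Y ω, Z ω)) ⁻¹' {(y, z)}) with hb
  set c := fun z => μ.real (Z ⁻¹' {z}) with hc
  have sum_p : ∑ x, ∑ y, ∑ z, p x y z = ∑ z, c z := by
    rw [Finset.sum_comm_cycle]
    refine Finset.sum_congr rfl fun z _ => ?_
    rw [Finset.sum_comm]
    simp only [hp, sum_measureReal_preimage_prodMk_singleton hX,
      sum_measureReal_preimage_prodMk_singleton hY, hc]
  -- `a x z * b y z / c z` is the mass of the coupling of `X` and `Y` independent given `Z`.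
  have sum_coupling : ∑ x, ∑ y, ∑ z, a x z * b y z / c z = ∑ z, c z := by
    rw [Finset.sum_comm_cycle]
    refine Finset.sum_congr rfl fun z _ => ?_
    simp only [← Finset.sum_div, ← Finset.mul_sum, ← Finset.sum_mul, ha, hb,
      sum_measureReal_preimage_prodMk_singleton hX,
      sum_measureReal_preimage_prodMk_singleton hY, hc, mul_self_div_self]
  calc 0 = ∑ x, ∑ y, ∑ z, (p x y z - a x z * b y z / c z) := by
        simp only [Finset.sum_sub_distrib, sum_p, sum_coupling, sub_self]
    _ ≤ condMutInf μ X Y Z := by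
        rw [condMutInf_eq_sum hX hY hZ]
        gcongr with x _ y _ z _
        apply sub_mul_div_le_mul_log measureReal_nonneg <;>
          exact measureReal_mono fun ω => by simp +contextual

lemma condMutInf_eq_zero_of_mul_eq_mul (hX : AEMeasurable X μ) (hY : AEMeasurable Y μ)
    (hZ : AEMeasurable Z μ)
    (h : ∀ x y z, μ.real ((fun ω => (X ω, Y ω, Z ω)) ⁻¹' {(x, y, z)}) * μ.real (Z ⁻¹' {z}) =
      μ.real ((fun ω => (X ω, Z ω)) ⁻¹' {(x, z)}) * μ.real ((fun ω => (Y ω, Z ω)) ⁻¹' {(y, z)})) :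
    condMutInf μ X Y Z = 0 := by
  rw [condMutInf_eq_sum hX hY hZ]
  refine Finset.sum_eq_zero fun x _ => Finset.sum_eq_zero fun y _ =>
    Finset.sum_eq_zero fun z _ => ?_
  by_cases hp : μ.real ((fun ω => (X ω, Y ω, Z ω)) ⁻¹' {(x, y, z)}) = 0
  · rw [hp, zero_mul]
  have pos_of_subset {s : Set Ω} (hs : (fun ω => (X ω, Y ω, Z ω)) ⁻¹' {(x, y, z)} ⊆ s) :
      0 < μ.real s := (measureReal_nonneg.lt_of_ne' hp).trans_le (measureReal_mono hs)
  have hlog := congrArg Real.log (h x y z)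
  rw [Real.log_mul hp (pos_of_subset fun ω => by simp +contextual).ne',
    Real.log_mul (pos_of_subset fun ω => by simp +contextual).ne'
      (pos_of_subset fun ω => by simp +contextual).ne'] at hlog
  rw [hlog]
  ring

end CondMutInf

section Shannon

variable {H : Type*} [Fintype H] [MeasurableSpace H] [MeasurableSingletonClass H]
  [IsFiniteMeasure μ] {X : Ω → E} {Y : Ω → F} {Z : Ω → G} {W : Ω → H}

lemma condMutInf_comp_left_le (hX : AEMeasurable X μ) (hY : AEMeasurable Y μ)
    (hZ : AEMeasurable Z μ) (f : E → H) :
    condMutInf μ (fun ω => f (X ω)) Y Z ≤ condMutInf μ X Y Z := by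
  have hfX : AEMeasurable (fun ω => f (X ω)) μ :=
    (Measurable.of_discrete (f := f)).comp_aemeasurable hX
  have hnonneg := condMutInf_nonneg hX hY (hfX.prodMk hZ)
  have hXZ : entH μ (fun ω => (X ω, f (X ω), Z ω)) = entH μ (fun ω => (X ω, Z ω)) :=
    entH_congr (by grind)
  have hYZ : entH μ (fun ω => (Y ω, f (X ω), Z ω)) = entH μ (fun ω => (f (X ω), Y ω, Z ω)) :=
    entH_congr (by grind)
  have hXYZ : entH μ (fun ω => (X ω, Y ω, f (X ω), Z ω)) = entH μ (fun ω => (X ω, Y ω, Z ω)) :=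
    entH_congr (by grind)
  simp only [condMutInf] at hnonneg ⊢
  linarith

lemma mutInf_le_mutInf_add_condMutInf (hX : AEMeasurable X μ) (hY : AEMeasurable Y μ)
    (hZ : AEMeasurable Z μ) : mutInf μ X Y ≤ mutInf μ Z Y + condMutInf μ X Y Z := by
  have hnonneg := condMutInf_nonneg hZ hY hX
  have hZYX : entH μ (fun ω => (Z ω, Y ω, X ω)) = entH μ (fun ω => (X ω, Y ω, Z ω)) :=
    entH_congr (by grind)
  simp only [mutInf, condMutInf, hZYX, entH_prodMk_comm Z X, entH_prodMk_comm Y X,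
    entH_prodMk_comm Z Y] at hnonneg ⊢
  linarith

lemma mutInf_add_mutInf_le (hX : AEMeasurable X μ) (hY : AEMeasurable Y μ)
    (hZ : AEMeasurable Z μ) :
    mutInf μ X Z + mutInf μ Y Z ≤ mutInf μ (fun ω => (X ω, Y ω)) Z + mutInf μ X Y := by
  have hnonneg := condMutInf_nonneg hX hY hZ
  have hXYZ : entH μ (fun ω => ((X ω, Y ω), Z ω)) = entH μ (fun ω => (X ω, Y ω, Z ω)) :=
    entH_congr (by grind)
  simp only [mutInf, condMutInf] at hnonneg ⊢
  linarith

lemma mutInf_le_ingleton_add_condMutInf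
    (hX : AEMeasurable X μ) (hY : AEMeasurable Y μ) (hZ : AEMeasurable Z μ)
    (hW : AEMeasurable W μ) :
    mutInf μ X Y ≤ condMutInf μ X Y Z + condMutInf μ X Y W + mutInf μ Z W
      + condMutInf μ Z W (fun ω => (X ω, Y ω)) := by
  have hXY := condMutInf_nonneg hX hY (hZ.prodMk hW)
  have hZWX := condMutInf_nonneg hZ hW hX
  have hZWY := condMutInf_nonneg hZ hW hY
  have hXYZW : entH μ (fun ω => (X ω, Y ω, Z ω, W ω)) = entH μ (fun ω => (Z ω, W ω, X ω, Y ω)) :=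
    entH_congr (by grind)
  simp only [mutInf, condMutInf, hXYZW, entH_prodMk_comm Z X, entH_prodMk_comm W X,
    entH_prodMk_comm Z Y, entH_prodMk_comm W Y, entH_prodMk_rotate X Z W,
    entH_prodMk_rotate Y Z W, entH_prodMk_rotate Z X Y,
    entH_prodMk_rotate W X Y] at hXY hZWX hZWY ⊢
  linarith

lemma two_mul_mutInf_le_add_three_mul_condMutInf {I : Type*} [Fintype I] [MeasurableSpace I]
    [MeasurableSingletonClass I] {V : Ω → I}
    (hX : AEMeasurable X μ) (hY : AEMeasurable Y μ) (hZ : AEMeasurable Z μ)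
    (hW : AEMeasurable W μ) (hV : AEMeasurable V μ) :
    2 * mutInf μ X Y ≤ 2 * condMutInf μ X Y V + condMutInf μ X Y Z + condMutInf μ X Y W
      + mutInf μ Z W + mutInf μ (fun ω => (X ω, Y ω)) V
      + 3 * condMutInf μ (fun ω => (Z ω, W ω)) V (fun ω => (X ω, Y ω)) := by
  have hZV := mutInf_le_ingleton_add_condMutInf hX hY hZ hV
  have hWV := mutInf_le_ingleton_add_condMutInf hX hY hW hV
  have hZ_le := condMutInf_comp_left_le (hZ.prodMk hW) hV (hX.prodMk hY) Prod.fst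
  have hW_le := condMutInf_comp_left_le (hZ.prodMk hW) hV (hX.prodMk hY) Prod.snd
  have hZWV := mutInf_add_mutInf_le hZ hW hV
  have hZW_le := mutInf_le_mutInf_add_condMutInf (hZ.prodMk hW) hV (hX.prodMk hY)
  linarith

end Shannon

lemma condMutInf_compProd_prod {ρ : Measure G} [IsFiniteMeasure ρ] {κ : Kernel G E}
    {η : Kernel G F} [IsMarkovKernel κ] [IsMarkovKernel η] :
    condMutInf (ρ ⊗ₘ (κ ×ₖ η)) (fun t => t.2.1) (fun t => t.2.2) (fun t => t.1) = 0 := by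
  refine condMutInf_eq_zero_of_mul_eq_mul (by fun_prop) (by fun_prop) (by fun_prop)
    fun x y z => ?_
  set ν := ρ ⊗ₘ (κ ×ₖ η)
  have real_xyz : ν.real ((fun t => (t.2.1, t.2.2, t.1)) ⁻¹' {(x, y, z)}) =
      ρ.real {z} * ((κ z).real {x} * (η z).real {y}) := by
    rw [← measureReal_prod_prod, Set.singleton_prod_singleton, ← Kernel.prod_apply,
      ← compProd_real_singleton]
    congr 1
    grind
  have real_xz : ν.real ((fun t => (t.2.1, t.1)) ⁻¹' {(x, z)}) = ρ.real {z} * (κ z).real {x} := by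
    rw [← compProd_real_singleton, ← map_compProd_prod_fst (η := η),
      map_measureReal_apply (by fun_prop) (measurableSet_singleton _)]
    congr 1
    grind
  have real_yz : ν.real ((fun t => (t.2.2, t.1)) ⁻¹' {(y, z)}) = ρ.real {z} * (η z).real {y} := by
    rw [← compProd_real_singleton, ← map_compProd_prod_snd (κ := κ),
      map_measureReal_apply (by fun_prop) (measurableSet_singleton _)]
    congr 1
    grind
  have real_z : ν.real (Prod.fst ⁻¹' {z}) = ρ.real {z} := by
    rw [← map_measureReal_apply measurable_fst (measurableSet_singleton _), ← Measure.fst,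
      Measure.fst_compProd]
  rw [real_xyz, real_xz, real_yz, real_z]
  ring

lemma exists_condIndep_coupling [IsFiniteMeasure μ] [Nonempty E] [Nonempty F]
    {X : Ω → E} {Y : Ω → F} {Z : Ω → G}
    (hX : AEMeasurable X μ) (hY : AEMeasurable Y μ) (hZ : AEMeasurable Z μ) :
    ∃ ν : Measure (G × E × F), IsFiniteMeasure ν ∧
      IdentDistrib (fun t => (t.1, t.2.1)) (fun ω => (Z ω, X ω)) ν μ ∧
      IdentDistrib (fun t => (t.1, t.2.2)) (fun ω => (Z ω, Y ω)) ν μ ∧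
      condMutInf ν (fun t => t.2.1) (fun t => t.2.2) (fun t => t.1) = 0 := by
  refine ⟨μ.map Z ⊗ₘ (condDistrib X Z μ ×ₖ condDistrib Y Z μ), inferInstance,
    ⟨by fun_prop, by fun_prop, ?_⟩, ⟨by fun_prop, by fun_prop, ?_⟩, condMutInf_compProd_prod⟩
  · rw [map_compProd_prod_fst, compProd_map_condDistrib hX]
  · rw [map_compProd_prod_snd, compProd_map_condDistrib hY]

end Entropy

section ZhangYeung

variable {Ω E1 E2 E3 E4 : Type*} [MeasurableSpace Ω]
  [Fintype E1] [Fintype E2] [Fintype E3] [Fintype E4]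
  [MeasurableSpace E1] [MeasurableSingletonClass E1]
  [MeasurableSpace E2] [MeasurableSingletonClass E2]
  [MeasurableSpace E3] [MeasurableSingletonClass E3]
  [MeasurableSpace E4] [MeasurableSingletonClass E4]
  {μ : Measure Ω} [IsFiniteMeasure μ]
  {X1 : Ω → E1} {X2 : Ω → E2} {X3 : Ω → E3} {X4 : Ω → E4}

lemma zhang_yeung_mutInf_inequality (hX1 : AEMeasurable X1 μ) (hX2 : AEMeasurable X2 μ)
    (hX3 : AEMeasurable X3 μ) (hX4 : AEMeasurable X4 μ) :
    2 * mutInf μ X1 X2 ≤ 3 * condMutInf μ X1 X2 X3 + condMutInf μ X1 X2 X4 + mutInf μ X3 X4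
      + mutInf μ (fun ω => (X1 ω, X2 ω)) X3 := by
  rcases isEmpty_or_nonempty Ω with _ | hΩ
  · simp [mutInf, condMutInf, entH, Measure.eq_zero_of_isEmpty μ]
  have := hΩ.map X3
  have := hΩ.map X4
  obtain ⟨ν, _, law_orig, law_copy, hindep⟩ :=
    exists_condIndep_coupling (hX3.prodMk hX4) hX3 (hX1.prodMk hX2)
  have h := two_mul_mutInf_le_add_three_mul_condMutInf (μ := ν)
    (X := fun t => t.1.1) (Y := fun t => t.1.2) (Z := fun t => t.2.1.1)
    (W := fun t => t.2.1.2) (V := fun t => t.2.2)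
    (by fun_prop) (by fun_prop) (by fun_prop) (by fun_prop) (by fun_prop)
  rw [hindep] at h
  have h12 : mutInf ν (fun t => t.1.1) (fun t => t.1.2) = mutInf μ X1 X2 :=
    mutInf_eq_of_identDistrib (law_copy.comp (u := Prod.fst) (by fun_prop))
  have h34 : mutInf ν (fun t => t.2.1.1) (fun t => t.2.1.2) = mutInf μ X3 X4 :=
    mutInf_eq_of_identDistrib (law_orig.comp (u := Prod.snd) (by fun_prop))
  have h123 : mutInf ν (fun t => (t.1.1, t.1.2)) (fun t => t.2.2) =
      mutInf μ (fun ω => (X1 ω, X2 ω)) X3 := mutInf_eq_of_identDistrib law_copy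
  have h12_3 : condMutInf ν (fun t => t.1.1) (fun t => t.1.2) (fun t => t.2.1.1) =
      condMutInf μ X1 X2 X3 := condMutInf_eq_of_identDistrib
    (law_orig.comp (u := fun t => (t.1.1, t.1.2, t.2.1)) (by fun_prop))
  have h12_4 : condMutInf ν (fun t => t.1.1) (fun t => t.1.2) (fun t => t.2.1.2) =
      condMutInf μ X1 X2 X4 := condMutInf_eq_of_identDistrib
    (law_orig.comp (u := fun t => (t.1.1, t.1.2, t.2.2)) (by fun_prop))
  have h12_copy : condMutInf ν (fun t => t.1.1) (fun t => t.1.2) (fun t => t.2.2) =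
      condMutInf μ X1 X2 X3 := condMutInf_eq_of_identDistrib
    (law_copy.comp (u := fun t => (t.1.1, t.1.2, t.2)) (by fun_prop))
  linarith

theorem zhang_yeung_inequality_general (hX1 : AEMeasurable X1 μ) (hX2 : AEMeasurable X2 μ)
    (hX3 : AEMeasurable X3 μ) (hX4 : AEMeasurable X4 μ) :
    0 ≤ -entH μ X1 - entH μ X2 - (1 / 2) * entH μ X3
      + (3 / 2) * entH μ (fun ω => (X1 ω, X2 ω))
      + (3 / 2) * entH μ (fun ω => (X1 ω, X3 ω))
      + (1 / 2) * entH μ (fun ω => (X1 ω, X4 ω))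
      + (3 / 2) * entH μ (fun ω => (X2 ω, X3 ω))
      + (1 / 2) * entH μ (fun ω => (X2 ω, X4 ω))
      - (1 / 2) * entH μ (fun ω => (X3 ω, X4 ω))
      - 2 * entH μ (fun ω => (X1 ω, X2 ω, X3 ω))
      - (1 / 2) * entH μ (fun ω => (X1 ω, X2 ω, X4 ω)) := by
  have h := zhang_yeung_mutInf_inequality hX1 hX2 hX3 hX4
  have h123 : entH μ (fun ω => ((X1 ω, X2 ω), X3 ω)) = entH μ (fun ω => (X1 ω, X2 ω, X3 ω)) :=
    entH_congr (by grind)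
  simp only [mutInf, condMutInf, h123] at h
  linarith

end ZhangYeung

/-- **Zhang–Yeung non-Shannon inequality** for four jointly distributed finite
random variables. -/
theorem zhang_yeung_inequality {Ω E1 E2 E3 E4 : Type*} [MeasurableSpace Ω]
    [Fintype E1] [Fintype E2] [Fintype E3] [Fintype E4]
    [MeasurableSpace E1] [MeasurableSingletonClass E1]
    [MeasurableSpace E2] [MeasurableSingletonClass E2]
    [MeasurableSpace E3] [MeasurableSingletonClass E3]
    [MeasurableSpace E4] [MeasurableSingletonClass E4]
    (μ : Measure Ω) [IsProbabilityMeasure μ]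
    (X1 : Ω → E1) (X2 : Ω → E2) (X3 : Ω → E3) (X4 : Ω → E4)
    (hX1 : Measurable X1) (hX2 : Measurable X2) (hX3 : Measurable X3) (hX4 : Measurable X4) :
    0 ≤ -entH μ X1 - entH μ X2 - (1 / 2) * entH μ X3
      + (3 / 2) * entH μ (fun ω => (X1 ω, X2 ω))
      + (3 / 2) * entH μ (fun ω => (X1 ω, X3 ω))
      + (1 / 2) * entH μ (fun ω => (X1 ω, X4 ω))
      + (3 / 2) * entH μ (fun ω => (X2 ω, X3 ω))
      + (1 / 2) * entH μ (fun ω => (X2 ω, X4 ω))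
      - (1 / 2) * entH μ (fun ω => (X3 ω, X4 ω))
      - 2 * entH μ (fun ω => (X1 ω, X2 ω, X3 ω))
      - (1 / 2) * entH μ (fun ω => (X1 ω, X2 ω, X4 ω)) :=
  zhang_yeung_inequality_general hX1.aemeasurable hX2.aemeasurable hX3.aemeasurable
    hX4.aemeasurable
end

section
/- For any four jointly distributed finite random variables X1, X2, X3, X4 and any natural number s ≥ 1, the first Matúš inequality holds: s[I(X1:X2|X3) + I(X1:X2|X4) + I(X3:X4) - I(X1:X2)] + I(X1:X3|X2) + (s(s+1)/2)[I(X2:X3|X1) + I(X1:X2|X3)] ≥ 0, where I(·:·) denotes mutual information and I(·:·|·) denotes conditional mutual information. -/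
open MeasureTheory ProbabilityTheory

/-!
Matúš's proof. A family of inequalities with a fifth variable `E` is proved by induction on `s`,
in two versions exchanged by swapping the roles of the first and the third variable. For the
inductive step, replace `E` by a copy `R` that has the same joint law with `(A, B)` but is
independent of everything else given `(A, B)`. This leaves the required inequality for `A, B, E`
unchanged, while the conditional independence yields two extra inequalities; adding these to the
other version for `s`, applied to `R`, gives the version for `s + 1`. Taking `E = X3` finally
gives the four-variable inequality.

A random variable on a finite space matters only through the partition of the space into its
fibres, so entropy is treated as a function on equivalence relations. The pair of two variables is
then the meet, and the permutations of joint variables become identities in a semilattice.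
-/

open scoped NNReal

namespace Matus

section Shannon

variable {L : Type*} [SemilatticeInf L]

/-- Conditional mutual information `I(x : y | z)` of a function `h` on a meet-semilattice, where the
meet of two elements stands for the joint variable. -/
def condInfo (h : L → ℝ) (x y z : L) : ℝ :=
  h (x ⊓ z) + h (y ⊓ z) - h (x ⊓ (y ⊓ z)) - h z

/-- Mutual information `I(x : y)` of a function `h` on a meet-semilattice. -/
def info (h : L → ℝ) (x y : L) : ℝ :=
  h x + h y - h (x ⊓ y)

/-- Conditional entropy `H(x | y)` of a function `h` on a meet-semilattice. -/
def condEntropy (h : L → ℝ) (x y : L) : ℝ :=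
  h (x ⊓ y) - h y

/-- The Ingleton expression `I(a : b | c) + I(a : b | d) + I(c : d) - I(a : b)`. -/
def ingleton (h : L → ℝ) (a b c d : L) : ℝ :=
  condInfo h a b c + condInfo h a b d + info h c d - info h a b

/-- A function on a meet-semilattice that satisfies all Shannon inequalities. The case `x = y` says
that conditional entropies are nonnegative. -/
def IsShannon (h : L → ℝ) : Prop :=
  ∀ x y z, 0 ≤ condInfo h x y z

/-- The right-hand side of Matúš's five-variable inequality, with an arbitrary number `g` in place
of the Ingleton expression: the induction uses it with `a` and `c` exchanged but `g` fixed. -/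
noncomputable def matusForm (h : L → ℝ) (g : ℝ) (s : ℕ) (a b c e : L) : ℝ :=
  s * (g + (condInfo h a b e + condInfo h b e a)) + condInfo h a e b
    + s * (s - 1) / 2 * (condInfo h b c a + condInfo h a b c)

variable {h : L → ℝ}

lemma condInfo_comm (h : L → ℝ) (x y z : L) : condInfo h x y z = condInfo h y x z := by
  simp only [condInfo, inf_left_comm y x z]
  ring

lemma condInfo_eq_condEntropy_sub (h : L → ℝ) (x r z : L) :
    condInfo h x r z = condEntropy h r z - condEntropy h r (x ⊓ z) := by
  simp only [condInfo, condEntropy, inf_left_comm r x z]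
  ring

lemma condInfo_inf_right (h : L → ℝ) (x y z r : L) :
    condInfo h x y (z ⊓ r) = condInfo h x y z - condEntropy h r z + condEntropy h r (x ⊓ z)
      + condEntropy h r (y ⊓ z) - condEntropy h r (x ⊓ (y ⊓ z)) := by
  simp only [condInfo, condEntropy, inf_comm, inf_left_comm]
  ring

lemma condInfo_eq_info_sub (h : L → ℝ) (x y r : L) :
    condInfo h x y r = info h x y - h r + condEntropy h r x + condEntropy h r y
      - condEntropy h r (x ⊓ y) := by
  simp only [condInfo, info, condEntropy, inf_comm, inf_left_comm]
  ring

lemma ingleton_eq (h : L → ℝ) (a b c d : L) :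
    ingleton h a b c d = condInfo h b c a + condInfo h a b d + info h c d - info h b c := by
  simp only [ingleton, condInfo, info, inf_comm, inf_left_comm]
  ring

lemma IsShannon.condEntropy_mono (hh : IsShannon h) (r : L) {x y : L} (hxy : x ≤ y) :
    condEntropy h r x ≤ condEntropy h r y := by
  have hnonneg := hh x r y
  rw [condInfo_eq_condEntropy_sub, inf_eq_left.2 hxy] at hnonneg
  linarith

lemma IsShannon.le_condInfo (hh : IsShannon h) (r x y z : L) :
    condEntropy h r z - condEntropy h r (x ⊓ z) - condEntropy h r (y ⊓ z)
      + condEntropy h r (x ⊓ (y ⊓ z)) ≤ condInfo h x y z := by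
  linarith [hh x y (z ⊓ r), condInfo_inf_right h x y z r]

lemma IsShannon.le_info (hh : IsShannon h) (r x y : L) :
    h r - condEntropy h r x - condEntropy h r y + condEntropy h r (x ⊓ y) ≤ info h x y := by
  linarith [hh x y r, condInfo_eq_info_sub h x y r]

lemma IsShannon.condEntropy_inf_eq_of_condInfo_eq_zero (hh : IsShannon h) {r x y z : L}
    (hr : condInfo h r y z = 0) (hyx : y ≤ x) :
    condEntropy h r (x ⊓ z) = condEntropy h r z := by
  rw [condInfo_comm, condInfo_eq_condEntropy_sub] at hr
  linarith [hh.condEntropy_mono r (inf_le_inf_right z hyx),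
    hh.condEntropy_mono r (inf_le_right : x ⊓ z ≤ z)]

lemma IsShannon.condInfo_le_ingleton_add_left (hh : IsShannon h) {a b c d r : L}
    (hr : condInfo h r (c ⊓ d) (a ⊓ b) = 0) :
    condInfo h c r b ≤ ingleton h a b c d
      + (condInfo h a b r + condInfo h b r a + condInfo h a r b) := by
  have hc := hh.condEntropy_inf_eq_of_condInfo_eq_zero hr inf_le_left
  have hd := hh.condEntropy_inf_eq_of_condInfo_eq_zero hr inf_le_right
  have hcd := hh.condEntropy_inf_eq_of_condInfo_eq_zero hr le_rfl
  have hcd_le : condEntropy h r (c ⊓ d ⊓ (a ⊓ b)) ≤ condEntropy h r (c ⊓ d) :=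
    hh.condEntropy_mono r inf_le_left
  have hac : condEntropy h r (a ⊓ c) ≤ condEntropy h r a := hh.condEntropy_mono r inf_le_left
  have had : condEntropy h r (a ⊓ d) ≤ condEntropy h r a := hh.condEntropy_mono r inf_le_left
  have hbd : condEntropy h r (b ⊓ d) ≤ condEntropy h r b := hh.condEntropy_mono r inf_le_left
  have habc := hh.le_condInfo r a b c
  have habd := hh.le_condInfo r a b d
  have hinfo := hh.le_info r c d
  rw [ingleton, condInfo_eq_info_sub h a b r]
  simp only [condInfo_eq_condEntropy_sub, inf_comm, inf_left_comm] at *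
  linarith

lemma IsShannon.condInfo_le_ingleton_add_right (hh : IsShannon h) {a b c d r : L}
    (hr : condInfo h r (a ⊓ d) (c ⊓ b) = 0) :
    condInfo h a r b ≤ ingleton h a b c d
      + (condInfo h c b r + condInfo h b r c + condInfo h c r b) := by
  have ha := hh.condEntropy_inf_eq_of_condInfo_eq_zero hr inf_le_left
  have had := hh.condEntropy_inf_eq_of_condInfo_eq_zero hr le_rfl
  have hbd_le : condEntropy h r (a ⊓ d ⊓ (c ⊓ b)) ≤ condEntropy h r (a ⊓ d ⊓ b) :=
    hh.condEntropy_mono r (inf_le_inf_left _ inf_le_right)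
  have hcd_le : condEntropy h r (a ⊓ d ⊓ (c ⊓ b)) ≤ condEntropy h r (d ⊓ c) :=
    hh.condEntropy_mono r (inf_le_inf inf_le_right inf_le_left)
  have had_le : condEntropy h r (a ⊓ d) ≤ condEntropy h r a := hh.condEntropy_mono r inf_le_left
  have hac_le : condEntropy h r (a ⊓ c) ≤ condEntropy h r c := hh.condEntropy_mono r inf_le_right
  have hbd : condEntropy h r (b ⊓ d) ≤ condEntropy h r b := hh.condEntropy_mono r inf_le_left
  have hbca := hh.le_condInfo r b c a
  have habd := hh.le_condInfo r a b d
  have hinfo := hh.le_info r c d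
  rw [ingleton_eq, condInfo_comm h c b r, condInfo_eq_info_sub h b c r]
  simp only [condInfo_eq_condEntropy_sub h _ r, inf_comm, inf_left_comm] at *
  linarith

lemma IsShannon.condInfo_add_condInfo_le (hh : IsShannon h) {a b c r : L}
    (hr : condInfo h r c (a ⊓ b) = 0) :
    condInfo h c b r + condInfo h b r c ≤
      condInfo h a b r + condInfo h b r a + (condInfo h b c a + condInfo h a b c) := by
  have hab := hh a b (c ⊓ r)
  have hcr := hh c r a
  simp only [condInfo, inf_comm, inf_left_comm] at *
  linarith

lemma IsShannon.matusForm_succ_nonneg (hh : IsShannon h) {g : ℝ} {s : ℕ} {a b c r : L}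
    (hg : condInfo h c r b ≤ g + (condInfo h a b r + condInfo h b r a + condInfo h a r b))
    (hr : condInfo h r c (a ⊓ b) = 0) (hs : 0 ≤ matusForm h g s c b a r) :
    0 ≤ matusForm h g (s + 1) a b c r := by
  have hexchange := mul_le_mul_of_nonneg_left (hh.condInfo_add_condInfo_le hr) s.cast_nonneg
  simp only [matusForm, condInfo_comm h b a c, condInfo_comm h c b a, Nat.cast_add_one] at hs ⊢
  linarith

end Shannon

section Weight

lemma comap_inf {Ω Ω' : Type*} (f : Ω' → Ω) (X Y : Setoid Ω) :
    (X ⊓ Y).comap f = X.comap f ⊓ Y.comap f :=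
  rfl

variable {Ω Ω' : Type*} [Fintype Ω] [Fintype Ω']

open Classical in
/-- The weight of the equivalence class of `a`. -/
noncomputable def mass (w : Ω → ℝ≥0) (X : Setoid Ω) (a : Ω) : ℝ≥0 :=
  ∑ b with X b a, w b

/-- The entropy of the partition into the classes of `X`, for a weight that need not have
total mass one. -/
noncomputable def entropy (w : Ω → ℝ≥0) (X : Setoid Ω) : ℝ :=
  -∑ a, w a * Real.log (mass w X a)

open Classical in
/-- The weight `w` is the image of the weight `w'` under `f`. -/
def IsMarginal (f : Ω' → Ω) (w' : Ω' → ℝ≥0) (w : Ω → ℝ≥0) : Prop :=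
  ∀ a, ∑ x with f x = a, w' x = w a

open Classical in
/-- The weight of pairs `(ω, ω')` under which `ω` and `ω'` both have weight `w`, lie in the same
class of `V` and are conditionally independent given that class. Pulling back along `Prod.fst`
keeps a variable, pulling back along `Prod.snd` replaces it by its copy over `V`. -/
noncomputable def condCopy (w : Ω → ℝ≥0) (V : Setoid Ω) (x : Ω × Ω) : ℝ≥0 :=
  if V x.2 x.1 then w x.1 * w x.2 / mass w V x.1 else 0

variable {w : Ω → ℝ≥0}

lemma mass_congr (w : Ω → ℝ≥0) (X : Setoid Ω) {a b : Ω} (hab : X a b) :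
    mass w X a = mass w X b := by
  classical
  have hiff (c : Ω) : X c a ↔ X c b :=
    ⟨fun hca => X.trans' hca hab, fun hcb => X.trans' hcb (X.symm' hab)⟩
  simp only [mass, hiff]

lemma mass_ne_zero (X : Setoid Ω) {a : Ω} (ha : w a ≠ 0) : mass w X a ≠ 0 := by
  have hle : w a ≤ mass w X a :=
    Finset.single_le_sum_of_canonicallyOrdered (by simp)
  exact (ha.bot_lt.trans_le hle).ne'

lemma mass_ker {Γ : Type*} [DecidableEq Γ] (w : Ω → ℝ≥0) (f : Ω → Γ) (a : Ω) :
    mass w (Setoid.ker f) a = ∑ b with f b = f a, w b := by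
  simp only [mass, Setoid.ker_def]

lemma entropy_ker {Γ : Type*} [Fintype Γ] [DecidableEq Γ] (w : Ω → ℝ≥0) (f : Ω → Γ) :
    entropy w (Setoid.ker f) = ∑ e, Real.negMulLog ↑(∑ a with f a = e, w a) := by
  have hclass (e : Γ) : ∑ a with f a = e, w a * Real.log (mass w (Setoid.ker f) a) =
      -Real.negMulLog ↑(∑ a with f a = e, w a) := by
    rw [Real.negMulLog, neg_mul, neg_neg, NNReal.coe_sum, Finset.sum_mul]
    refine Finset.sum_congr rfl fun a ha => ?_
    rw [mass_ker, (Finset.mem_filter.1 ha).2, NNReal.coe_sum]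
  rw [entropy, ← Finset.sum_fiberwise Finset.univ f]
  simp only [hclass, Finset.sum_neg_distrib, neg_neg]

lemma entropy_congr {X Y : Setoid Ω}
    (hXY : ∀ a b, w a ≠ 0 → w b ≠ 0 → (X b a ↔ Y b a)) : entropy w X = entropy w Y := by
  classical
  rw [entropy, entropy]
  congr 1
  refine Finset.sum_congr rfl fun a _ => ?_
  rcases eq_or_ne (w a) 0 with ha | ha
  · simp only [ha, NNReal.coe_zero, zero_mul]
  have hmass : mass w X a = mass w Y a := by
    rw [mass, mass, Finset.sum_filter, Finset.sum_filter]
    refine Finset.sum_congr rfl fun b _ => ?_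
    rcases eq_or_ne (w b) 0 with hb | hb
    · simp only [hb, ite_self]
    · simp only [hXY a b ha hb]
  rw [hmass]

lemma IsMarginal.sum_smul_comp {M : Type*} [AddCommMonoid M] [Module ℝ≥0 M] {f : Ω' → Ω}
    {w' : Ω' → ℝ≥0} (hf : IsMarginal f w' w) (F : Ω → M) :
    ∑ x, w' x • F (f x) = ∑ a, w a • F a := by
  classical
  rw [← Finset.sum_fiberwise Finset.univ f]
  refine Finset.sum_congr rfl fun a _ => ?_
  rw [← hf a, Finset.sum_smul]
  exact Finset.sum_congr rfl fun x hx => by rw [(Finset.mem_filter.1 hx).2]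

lemma IsMarginal.sum_eq {f : Ω' → Ω} {w' : Ω' → ℝ≥0} (hf : IsMarginal f w' w) :
    ∑ x, w' x = ∑ a, w a := by
  simpa only [smul_eq_mul, mul_one] using hf.sum_smul_comp fun _ => (1 : ℝ≥0)

lemma IsMarginal.mass_comap {f : Ω' → Ω} {w' : Ω' → ℝ≥0} (hf : IsMarginal f w' w)
    (X : Setoid Ω) (x : Ω') : mass w' (X.comap f) x = mass w X (f x) := by
  classical
  simpa only [mass, Setoid.comap_rel, Finset.sum_filter, smul_eq_mul, mul_ite, mul_one, mul_zero]
    using hf.sum_smul_comp fun a => if X a (f x) then (1 : ℝ≥0) else 0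

lemma IsMarginal.entropy_comap {f : Ω' → Ω} {w' : Ω' → ℝ≥0} (hf : IsMarginal f w' w)
    (X : Setoid Ω) : entropy w' (X.comap f) = entropy w X := by
  simp only [entropy, hf.mass_comap]
  exact congrArg Neg.neg (hf.sum_smul_comp fun a => Real.log (mass w X a))

lemma sum_mul_mass_div_mass_comap_le (w : Ω → ℝ≥0) (w' : Ω' → ℝ≥0) (f : Ω → Ω')
    (T : Setoid Ω') :
    ∑ a, w a * (mass w' T (f a) / mass w (T.comap f) a) ≤ ∑ y, w' y := by
  classical
  have hfiber (y : Ω') : ∑ a with T y (f a), w a / mass w (T.comap f) a ≤ 1 := by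
    by_cases hy : ∃ a, T y (f a)
    · obtain ⟨a, ha⟩ := hy
      have hclass (b : Ω) : T y (f b) ↔ T.comap f b a :=
        ⟨fun hb => T.trans' (T.symm' hb) ha, fun hb => T.trans' ha (T.symm' hb)⟩
      calc ∑ b with T y (f b), w b / mass w (T.comap f) b
          = ∑ b with T.comap f b a, w b / mass w (T.comap f) a := by
            simp only [hclass]
            refine Finset.sum_congr rfl fun b hb => ?_
            rw [mass_congr w _ (Finset.mem_filter.1 hb).2]
        _ = mass w (T.comap f) a / mass w (T.comap f) a := by rw [← Finset.sum_div, ← mass]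
        _ ≤ 1 := div_self_le_one _
    · push Not at hy
      simp only [hy, Finset.filter_false, Finset.sum_empty, zero_le_one]
  calc ∑ a, w a * (mass w' T (f a) / mass w (T.comap f) a)
      = ∑ y, w' y * ∑ a with T y (f a), w a / mass w (T.comap f) a := by
        simp only [mass.eq_def w', Finset.sum_filter, Finset.sum_div, Finset.mul_sum]
        rw [Finset.sum_comm]
        refine Finset.sum_congr rfl fun y _ => Finset.sum_congr rfl fun a _ => ?_
        split_ifs <;> ring
    _ ≤ ∑ y, w' y := Finset.sum_le_sum fun y _ => mul_le_of_le_one_right' (hfiber y)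

/-- Gibbs' inequality for the image of `w` under `f` and the weight `w'`, restricted to the classes
of `T`. -/
lemma entropy_comap_le_cross_entropy {w' : Ω' → ℝ≥0} {f : Ω → Ω'} {T : Setoid Ω'}
    (hsum : ∑ y, w' y ≤ ∑ a, w a) (hac : ∀ a, w a ≠ 0 → mass w' T (f a) ≠ 0) :
    entropy w (T.comap f) ≤ -∑ a, w a * Real.log (mass w' T (f a)) := by
  have hlog (a : Ω) : w a * Real.log (mass w' T (f a)) - w a * Real.log (mass w (T.comap f) a) ≤
      w a * (mass w' T (f a) / mass w (T.comap f) a) - w a := by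
    rcases eq_or_ne (w a) 0 with ha | ha
    · simp [ha]
    have hm : (mass w (T.comap f) a : ℝ) ≠ 0 := NNReal.coe_ne_zero.2 (mass_ne_zero _ ha)
    have hm' : (mass w' T (f a) : ℝ) ≠ 0 := NNReal.coe_ne_zero.2 (hac a ha)
    rw [← mul_sub, ← mul_sub_one, ← Real.log_div hm' hm]
    gcongr
    exact Real.log_le_sub_one_of_pos (by positivity)
  have hratio : ∑ a, (w a : ℝ) * (mass w' T (f a) / mass w (T.comap f) a) ≤ ∑ a, (w a : ℝ) := by
    exact_mod_cast (sum_mul_mass_div_mass_comap_le w w' f T).trans hsum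
  have hsum_log := Finset.sum_le_sum fun a (_ : a ∈ Finset.univ) => hlog a
  simp only [Finset.sum_sub_distrib] at hsum_log
  rw [entropy]
  linarith

lemma rel_of_condCopy_ne_zero {V : Setoid Ω} {x : Ω × Ω} (hx : condCopy w V x ≠ 0) :
    V x.2 x.1 := by
  by_contra hV
  exact hx (if_neg hV)

lemma condCopy_swap (w : Ω → ℝ≥0) (V : Setoid Ω) (x : Ω × Ω) :
    condCopy w V x.swap = condCopy w V x := by
  classical
  by_cases hx : V x.2 x.1
  · simp only [condCopy, Prod.fst_swap, Prod.snd_swap, if_pos hx, if_pos (V.symm' hx),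
      mass_congr w V hx, mul_comm]
  · simp only [condCopy, Prod.fst_swap, Prod.snd_swap, if_neg hx, V.comm' (x := x.1)]

lemma sum_condCopy (w : Ω → ℝ≥0) (V : Setoid Ω) (a : Ω) : ∑ b, condCopy w V (a, b) = w a := by
  classical
  calc ∑ b, condCopy w V (a, b) = w a * mass w V a / mass w V a := by
        simp only [condCopy, ← Finset.sum_filter, ← Finset.sum_div, ← Finset.mul_sum, mass]
    _ = w a := by
        rcases eq_or_ne (w a) 0 with ha | ha
        · simp [ha]
        · exact mul_div_cancel_right₀ _ (mass_ne_zero V ha)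

lemma isMarginal_fst_condCopy (w : Ω → ℝ≥0) (V : Setoid Ω) :
    IsMarginal Prod.fst (condCopy w V) w := by
  classical
  intro a
  rw [Finset.sum_filter, Fintype.sum_prod_type_right]
  simp [sum_condCopy]

lemma isMarginal_snd_condCopy (w : Ω → ℝ≥0) (V : Setoid Ω) :
    IsMarginal Prod.snd (condCopy w V) w := by
  classical
  intro a
  rw [Finset.sum_filter, Fintype.sum_prod_type]
  simpa using (Finset.sum_congr rfl fun b _ => condCopy_swap w V (a, b)).trans (sum_condCopy w V a)

lemma mass_condCopy (w : Ω → ℝ≥0) {V : Setoid Ω} (X T : Setoid Ω) {x : Ω × Ω}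
    (hx : V x.2 x.1) :
    mass (condCopy w V) (T.comap Prod.snd ⊓ (X ⊓ V).comap Prod.fst) x =
      mass w (X ⊓ V) x.1 * mass w (T ⊓ V) x.2 / mass w V x.1 := by
  classical
  have hterm (a b : Ω) :
      (if (T.comap Prod.snd ⊓ (X ⊓ V).comap Prod.fst) (a, b) x then condCopy w V (a, b) else 0) =
        (if (X ⊓ V) a x.1 then w a else 0) * (if (T ⊓ V) b x.2 then w b else 0)
          / mass w V x.1 := by
    simp only [Setoid.inf_iff_and, Setoid.comap_rel, condCopy]
    by_cases ha : V a x.1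
    · have hb : V b a ↔ V b x.2 :=
        ⟨fun h => V.trans' h (V.trans' ha (V.symm' hx)),
          fun h => V.trans' h (V.trans' hx (V.symm' ha))⟩
      rw [mass_congr w V ha]
      split_ifs <;> simp_all
    · have hXV : ¬(X ⊓ V) a x.1 := fun h => ha h.2
      simp [hXV]
  simp only [mass.eq_def (condCopy w V), Finset.sum_filter, Fintype.sum_prod_type, hterm]
  simp only [mass, Finset.sum_filter, Finset.sum_mul_sum, Finset.sum_div]

lemma log_mass_condCopy {V : Setoid Ω} (X T : Setoid Ω) {x : Ω × Ω} (hx : condCopy w V x ≠ 0) :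
    Real.log (mass (condCopy w V) (T.comap Prod.snd ⊓ (X ⊓ V).comap Prod.fst) x) =
      Real.log (mass w (X ⊓ V) x.1) + Real.log (mass w (T ⊓ V) x.2)
        - Real.log (mass w V x.1) := by
  have hw : w x.1 * w x.2 ≠ 0 := by
    intro h0
    exact hx (by simp [condCopy, h0])
  have hX : (mass w (X ⊓ V) x.1 : ℝ) ≠ 0 := by
    exact_mod_cast mass_ne_zero _ (left_ne_zero_of_mul hw)
  have hT : (mass w (T ⊓ V) x.2 : ℝ) ≠ 0 := by
    exact_mod_cast mass_ne_zero _ (right_ne_zero_of_mul hw)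
  have hV : (mass w V x.1 : ℝ) ≠ 0 := by
    exact_mod_cast mass_ne_zero _ (left_ne_zero_of_mul hw)
  rw [mass_condCopy w X T (rel_of_condCopy_ne_zero hx), NNReal.coe_div, NNReal.coe_mul,
    Real.log_div (mul_ne_zero hX hT) hV, Real.log_mul hX hT]

lemma condCopy_diag_ne_zero (V : Setoid Ω) {a : Ω} (ha : w a ≠ 0) : condCopy w V (a, a) ≠ 0 := by
  rw [condCopy, if_pos (V.refl' a)]
  exact div_ne_zero (mul_ne_zero ha ha) (mass_ne_zero V ha)

/-- Gibbs' inequality for the diagonal of `Ω × Ω` against the conditional copy: `I(X : Y | Z)` is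
the relative entropy of the law of `(X, Y, Z)` with respect to the law that makes `X` and `Y`
independent given `Z`. -/
lemma isShannon_entropy (w : Ω → ℝ≥0) : IsShannon (entropy w) := by
  intro X Y Z
  let T : Setoid (Ω × Ω) := Y.comap Prod.snd ⊓ (X ⊓ Z).comap Prod.fst
  have hgibbs : entropy w (X ⊓ (Y ⊓ Z)) ≤
      -∑ a, w a * Real.log (mass (condCopy w Z) T (a, a)) := by
    have hT : X ⊓ (Y ⊓ Z) = T.comap fun a => (a, a) := inf_left_comm X Y Z
    rw [hT]
    exact entropy_comap_le_cross_entropy (isMarginal_fst_condCopy w Z).sum_eq.le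
      fun a ha => mass_ne_zero T (condCopy_diag_ne_zero Z ha)
  have hlog (a : Ω) : w a * Real.log (mass (condCopy w Z) T (a, a)) =
      w a * Real.log (mass w (X ⊓ Z) a) + w a * Real.log (mass w (Y ⊓ Z) a)
        - w a * Real.log (mass w Z a) := by
    rcases eq_or_ne (w a) 0 with ha | ha
    · simp [ha]
    · rw [log_mass_condCopy X Y (condCopy_diag_ne_zero Z ha)]
      ring
  simp only [hlog, Finset.sum_sub_distrib, Finset.sum_add_distrib] at hgibbs
  simp only [condInfo, entropy] at hgibbs ⊢
  linarith

lemma entropy_condCopy_snd_inf_fst (w : Ω → ℝ≥0) {V U : Setoid Ω} (hU : V ≤ U) (T : Setoid Ω) :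
    entropy (condCopy w V) (T.comap Prod.snd ⊓ U.comap Prod.fst) = entropy w (T ⊓ U) := by
  rw [← (isMarginal_snd_condCopy w V).entropy_comap (T ⊓ U)]
  refine entropy_congr fun x y hx hy => and_congr_right fun _ => ?_
  have hxU : U x.2 x.1 := hU (rel_of_condCopy_ne_zero hx)
  have hyU : U y.2 y.1 := hU (rel_of_condCopy_ne_zero hy)
  exact ⟨fun h => U.trans' hyU (U.trans' h (U.symm' hxU)),
    fun h => U.trans' (U.symm' hyU) (U.trans' h hxU)⟩

lemma condInfo_condCopy_eq_zero (w : Ω → ℝ≥0) (V X T : Setoid Ω) :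
    condInfo (entropy (condCopy w V)) (T.comap Prod.snd) (X.comap Prod.fst) (V.comap Prod.fst)
      = 0 := by
  have hterm (x : Ω × Ω) : condCopy w V x *
      Real.log (mass (condCopy w V) (T.comap Prod.snd ⊓ (X ⊓ V).comap Prod.fst) x) =
      condCopy w V x * Real.log (mass (condCopy w V) ((X ⊓ V).comap Prod.fst) x)
        + condCopy w V x * Real.log (mass (condCopy w V) ((T ⊓ V).comap Prod.snd) x)
        - condCopy w V x * Real.log (mass (condCopy w V) (V.comap Prod.fst) x) := by
    rcases eq_or_ne (condCopy w V x) 0 with hx | hx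
    · simp [hx]
    · rw [log_mass_condCopy X T hx]
      simp only [(isMarginal_fst_condCopy w V).mass_comap, (isMarginal_snd_condCopy w V).mass_comap]
      ring
  have hjoint : entropy (condCopy w V) (T.comap Prod.snd ⊓ (X ⊓ V).comap Prod.fst) =
      entropy (condCopy w V) ((X ⊓ V).comap Prod.fst)
        + entropy (condCopy w V) ((T ⊓ V).comap Prod.snd)
        - entropy (condCopy w V) (V.comap Prod.fst) := by
    simp only [entropy, hterm, Finset.sum_sub_distrib, Finset.sum_add_distrib]
    ring
  rw [(isMarginal_snd_condCopy w V).entropy_comap,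
    ← entropy_condCopy_snd_inf_fst w le_rfl] at hjoint
  simp only [condInfo, ← comap_inf]
  linarith

lemma condInfo_condCopy_fst_fst_snd (w : Ω → ℝ≥0) {V X Y : Setoid Ω} (hX : V ≤ X) (hY : V ≤ Y)
    (T : Setoid Ω) :
    condInfo (entropy (condCopy w V)) (X.comap Prod.fst) (Y.comap Prod.fst) (T.comap Prod.snd) =
      condInfo (entropy w) X Y T := by
  have hpair {U : Setoid Ω} (hU : V ≤ U) :
      entropy (condCopy w V) (U.comap Prod.fst ⊓ T.comap Prod.snd) = entropy w (U ⊓ T) := by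
    rw [inf_comm, entropy_condCopy_snd_inf_fst w hU, inf_comm]
  simp only [condInfo, ← inf_assoc, ← comap_inf, hpair hX, hpair hY, hpair (le_inf hX hY),
    (isMarginal_snd_condCopy w V).entropy_comap]

lemma condInfo_condCopy_fst_snd_fst (w : Ω → ℝ≥0) {V X Y : Setoid Ω} (hX : V ≤ X) (hY : V ≤ Y)
    (T : Setoid Ω) :
    condInfo (entropy (condCopy w V)) (X.comap Prod.fst) (T.comap Prod.snd) (Y.comap Prod.fst) =
      condInfo (entropy w) X T Y := by
  simp only [condInfo, inf_left_comm _ (T.comap Prod.snd), inf_left_comm X T, ← comap_inf,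
    entropy_condCopy_snd_inf_fst w hY, entropy_condCopy_snd_inf_fst w (le_inf hX hY),
    (isMarginal_fst_condCopy w V).entropy_comap]

lemma IsMarginal.condInfo_comap {f : Ω' → Ω} {w' : Ω' → ℝ≥0} (hf : IsMarginal f w' w)
    (X Y Z : Setoid Ω) :
    condInfo (entropy w') (X.comap f) (Y.comap f) (Z.comap f) = condInfo (entropy w) X Y Z := by
  simp only [condInfo, ← comap_inf, hf.entropy_comap]

lemma IsMarginal.ingleton_comap {f : Ω' → Ω} {w' : Ω' → ℝ≥0} (hf : IsMarginal f w' w)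
    (A B C D : Setoid Ω) :
    ingleton (entropy w') (A.comap f) (B.comap f) (C.comap f) (D.comap f) =
      ingleton (entropy w) A B C D := by
  simp only [ingleton, info, hf.condInfo_comap, ← comap_inf, hf.entropy_comap]

lemma matusForm_condCopy (w : Ω → ℝ≥0) (g : ℝ) (s : ℕ) (A B C E : Setoid Ω) :
    matusForm (entropy (condCopy w (A ⊓ B))) g s (A.comap Prod.fst) (B.comap Prod.fst)
      (C.comap Prod.fst) (E.comap Prod.snd) = matusForm (entropy w) g s A B C E := by
  simp only [matusForm, (isMarginal_fst_condCopy w (A ⊓ B)).condInfo_comap,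
    condInfo_condCopy_fst_fst_snd w inf_le_left inf_le_right,
    condInfo_condCopy_fst_snd_fst w inf_le_left inf_le_right,
    condInfo_condCopy_fst_snd_fst w inf_le_right inf_le_left]

end Weight

section Induction

universe u

/-- Both versions must be proved for all weighted spaces at once, since the inductive step applies
the hypothesis for `s` on the space of pairs. -/
lemma matusForm_nonneg_and_swap (s : ℕ) :
    ∀ (Ω : Type u) [Fintype Ω] (w : Ω → ℝ≥0) (A B C D E : Setoid Ω),
      0 ≤ matusForm (entropy w) (ingleton (entropy w) A B C D) s A B C E ∧
        0 ≤ matusForm (entropy w) (ingleton (entropy w) A B C D) s C B A E := by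
  induction s with
  | zero =>
    intro Ω _ w A B C D E
    have hAE := isShannon_entropy w A E B
    have hCE := isShannon_entropy w C E B
    constructor <;> simpa [matusForm]
  | succ s ih =>
    intro Ω _ w A B C D E
    constructor
    · have hw' := isShannon_entropy (condCopy w (A ⊓ B))
      rw [← matusForm_condCopy, ← (isMarginal_fst_condCopy w (A ⊓ B)).ingleton_comap]
      exact hw'.matusForm_succ_nonneg
        (hw'.condInfo_le_ingleton_add_left (condInfo_condCopy_eq_zero w (A ⊓ B) (C ⊓ D) E))
        (condInfo_condCopy_eq_zero w (A ⊓ B) C E) (ih _ _ _ _ _ _ _).2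
    · have hw' := isShannon_entropy (condCopy w (C ⊓ B))
      rw [← matusForm_condCopy, ← (isMarginal_fst_condCopy w (C ⊓ B)).ingleton_comap]
      exact hw'.matusForm_succ_nonneg
        (hw'.condInfo_le_ingleton_add_right (condInfo_condCopy_eq_zero w (C ⊓ B) (A ⊓ D) E))
        (condInfo_condCopy_eq_zero w (C ⊓ B) A E) (ih _ _ _ _ _ _ _).1

end Induction

section Law

lemma ker_prodMk {Γ F G : Type*} (f : Γ → F) (g : Γ → G) :
    Setoid.ker (fun c => (f c, g c)) = Setoid.ker f ⊓ Setoid.ker g :=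
  Setoid.ext fun _ _ => Prod.ext_iff

variable {Ω Γ F G K : Type*} [MeasurableSpace Ω] [Fintype Γ]

/-- The law of a finite-valued random variable, as a weight on its values. -/
noncomputable def law (μ : Measure Ω) (Z : Ω → Γ) (c : Γ) : ℝ≥0 :=
  (μ (Z ⁻¹' {c})).toNNReal

variable (μ : Measure Ω) [IsFiniteMeasure μ] {Z : Ω → Γ}

lemma sum_law [DecidableEq F] (hZ : ∀ c, MeasurableSet (Z ⁻¹' {c})) (f : Γ → F) (e : F) :
    ∑ c with f c = e, law μ Z c = (μ ((fun ω => f (Z ω)) ⁻¹' {e})).toNNReal := by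
  have hpre : (fun ω => f (Z ω)) ⁻¹' {e} = Z ⁻¹' ↑({c | f c = e} : Finset Γ) := by
    ext ω
    simp
  rw [hpre, ← sum_measure_preimage_singleton _ fun c _ => hZ c,
    ENNReal.toNNReal_sum fun c _ => measure_ne_top μ _]
  rfl

variable [Fintype F] [Fintype G] [Fintype K]

lemma entH_comp (hZ : ∀ c, MeasurableSet (Z ⁻¹' {c})) (f : Γ → F) :
    entH μ (fun ω => f (Z ω)) = entropy (law μ Z) (Setoid.ker f) := by
  classical
  rw [entropy_ker]
  refine Finset.sum_congr rfl fun e _ => ?_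
  rw [sum_law μ hZ f e]
  rfl

lemma mutInf_comp (hZ : ∀ c, MeasurableSet (Z ⁻¹' {c})) (f : Γ → F) (g : Γ → G) :
    mutInf μ (fun ω => f (Z ω)) (fun ω => g (Z ω)) =
      info (entropy (law μ Z)) (Setoid.ker f) (Setoid.ker g) := by
  rw [mutInf, info, ← ker_prodMk, ← entH_comp μ hZ, ← entH_comp μ hZ, ← entH_comp μ hZ]

lemma condMutInf_comp (hZ : ∀ c, MeasurableSet (Z ⁻¹' {c})) (f : Γ → F) (g : Γ → G)
    (k : Γ → K) :
    condMutInf μ (fun ω => f (Z ω)) (fun ω => g (Z ω)) (fun ω => k (Z ω)) =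
      condInfo (entropy (law μ Z)) (Setoid.ker f) (Setoid.ker g) (Setoid.ker k) := by
  simp only [condMutInf, condInfo, ← ker_prodMk, ← entH_comp μ hZ]

end Law

end Matus

theorem matus_inequality_one_general {Ω E1 E2 E3 E4 E5 : Type*} [MeasurableSpace Ω]
    [Fintype E1] [Fintype E2] [Fintype E3] [Fintype E4] [Fintype E5]
    [MeasurableSpace E1] [MeasurableSingletonClass E1]
    [MeasurableSpace E2] [MeasurableSingletonClass E2]
    [MeasurableSpace E3] [MeasurableSingletonClass E3]
    [MeasurableSpace E4] [MeasurableSingletonClass E4]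
    [MeasurableSpace E5] [MeasurableSingletonClass E5]
    (μ : Measure Ω) [IsFiniteMeasure μ]
    {X1 : Ω → E1} {X2 : Ω → E2} {X3 : Ω → E3} {X4 : Ω → E4} {X5 : Ω → E5}
    (hX1 : Measurable X1) (hX2 : Measurable X2) (hX3 : Measurable X3) (hX4 : Measurable X4)
    (hX5 : Measurable X5) (s : ℕ) :
    0 ≤ (s : ℝ) * (condMutInf μ X1 X2 X3 + condMutInf μ X1 X2 X4 + mutInf μ X3 X4 - mutInf μ X1 X2
          + (condMutInf μ X1 X2 X5 + condMutInf μ X2 X5 X1))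
      + condMutInf μ X1 X5 X2
      + (s : ℝ) * ((s : ℝ) - 1) / 2 * (condMutInf μ X2 X3 X1 + condMutInf μ X1 X2 X3) := by
  let Z : Ω → E1 × E2 × E3 × E4 × E5 := fun ω => (X1 ω, X2 ω, X3 ω, X4 ω, X5 ω)
  have hZ : Measurable Z := by fun_prop
  have hmatus := (Matus.matusForm_nonneg_and_swap s _ (Matus.law μ Z)
    (Setoid.ker fun c => c.1) (Setoid.ker fun c => c.2.1) (Setoid.ker fun c => c.2.2.1)
    (Setoid.ker fun c => c.2.2.2.1) (Setoid.ker fun c => c.2.2.2.2)).1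
  simpa only [Matus.matusForm, Matus.ingleton,
    ← Matus.mutInf_comp μ fun c => hZ (measurableSet_singleton c),
    ← Matus.condMutInf_comp μ fun c => hZ (measurableSet_singleton c)] using hmatus

/-- **First Matúš inequality family** for four jointly distributed finite random
variables and any natural number `s ≥ 1`. -/
theorem matus_inequality_one {Ω E1 E2 E3 E4 : Type*} [MeasurableSpace Ω]
    [Fintype E1] [Fintype E2] [Fintype E3] [Fintype E4]
    [MeasurableSpace E1] [MeasurableSingletonClass E1]
    [MeasurableSpace E2] [MeasurableSingletonClass E2]
    [MeasurableSpace E3] [MeasurableSingletonClass E3]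
    [MeasurableSpace E4] [MeasurableSingletonClass E4]
    (μ : Measure Ω) [IsProbabilityMeasure μ]
    (X1 : Ω → E1) (X2 : Ω → E2) (X3 : Ω → E3) (X4 : Ω → E4)
    (hX1 : Measurable X1) (hX2 : Measurable X2) (hX3 : Measurable X3) (hX4 : Measurable X4)
    (s : ℕ) (hs : 1 ≤ s) :
    0 ≤ (s : ℝ) * (condMutInf μ X1 X2 X3 + condMutInf μ X1 X2 X4 + mutInf μ X3 X4
          - mutInf μ X1 X2)
      + condMutInf μ X1 X3 X2
      + ((s : ℝ) * ((s : ℝ) + 1) / 2) * (condMutInf μ X2 X3 X1 + condMutInf μ X1 X2 X3) := by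
  linarith [matus_inequality_one_general μ hX1 hX2 hX3 hX4 hX3 s]
end

section
/- Ingleton's inequality for subspace ranks: for any four subspaces V1, V2, V3, V4 of a finite-dimensional vector space over a field, dim(V1+V2) + dim(V1+V3) + dim(V1+V4) + dim(V2+V3) + dim(V2+V4) ≥ dim(V1) + dim(V2) + dim(V3+V4) + dim(V1+V2+V3) + dim(V1+V2+V4), where V+W denotes the span of the union (the join) of subspaces. -/
/-!
The rank `f` is monotone and submodular. For `k` below `a` and `b`, submodularity therefore gives
`f (c ⊔ d) + f k ≤ f (k ⊔ c) + f (k ⊔ d)` and `f (a ⊔ b ⊔ c) + f (k ⊔ c) ≤ f (a ⊔ c) + f (b ⊔ c)`,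
the latter also with `d` in place of `c`. Adding the three and cancelling `f (k ⊔ c) + f (k ⊔ d)`
bounds `f k`; infinite ranks can be cancelled because the cancelled sum is at most the upper bound.
Ingleton's inequality is this bound for `k = V1 ⊓ V2`, the common information of `V1` and `V2`,
whose rank is exactly `dim V1 + dim V2 - dim (V1 + V2)`.
-/

/-- Submodularity of a function on a lattice. The lattice of submodules, with `f` the rank, is the
case of interest; `M` need not be cancellative, so that ranks can be arbitrary cardinals. -/
def IsSubmodular {α M : Type*} [Lattice α] [Add M] [LE M] (f : α → M) : Prop :=
  ∀ x y, f (x ⊔ y) + f (x ⊓ y) ≤ f x + f y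

namespace IsSubmodular

variable {α M : Type*} [Lattice α] [AddCommMonoid M] [Preorder M] [IsOrderedAddMonoid M]
  {f : α → M} {a b k : α}

theorem apply_add_apply_le_of_le_sup_of_le_inf (hf : IsSubmodular f) (hmono : Monotone f) {u v : α}
    (hu : u ≤ a ⊔ b) (hv : v ≤ a ⊓ b) : f u + f v ≤ f a + f b :=
  (add_le_add (hmono hu) (hmono hv)).trans (hf a b)

theorem apply_sup_sup_add_apply_sup_le (hf : IsSubmodular f) (hmono : Monotone f)
    (hka : k ≤ a) (hkb : k ≤ b) (c : α) :
    f (a ⊔ b ⊔ c) + f (k ⊔ c) ≤ f (a ⊔ c) + f (b ⊔ c) :=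
  hf.apply_add_apply_le_of_le_sup_of_le_inf hmono (sup_sup_distrib_right a b c).le
    (le_inf (sup_le_sup_right hka c) (sup_le_sup_right hkb c))

theorem apply_sup_add_apply_le (hf : IsSubmodular f) (hmono : Monotone f) (k c d : α) :
    f (c ⊔ d) + f k ≤ f (k ⊔ c) + f (k ⊔ d) :=
  hf.apply_add_apply_le_of_le_sup_of_le_inf hmono
    (sup_le_sup le_sup_right le_sup_right) (le_inf le_sup_left le_sup_left)

theorem common_information_add_le (hf : IsSubmodular f) (hmono : Monotone f)
    (hka : k ≤ a) (hkb : k ≤ b) (c d : α) :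
    f k + f (c ⊔ d) + f (a ⊔ b ⊔ c) + f (a ⊔ b ⊔ d) + (f (k ⊔ c) + f (k ⊔ d)) ≤
      f (a ⊔ c) + f (a ⊔ d) + f (b ⊔ c) + f (b ⊔ d) + (f (k ⊔ c) + f (k ⊔ d)) :=
  calc
    _ = (f (a ⊔ b ⊔ c) + f (k ⊔ c)) + (f (a ⊔ b ⊔ d) + f (k ⊔ d)) + (f (c ⊔ d) + f k) := by
      abel
    _ ≤ (f (a ⊔ c) + f (b ⊔ c)) + (f (a ⊔ d) + f (b ⊔ d)) + (f (k ⊔ c) + f (k ⊔ d)) :=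
      add_le_add
        (add_le_add (hf.apply_sup_sup_add_apply_sup_le hmono hka hkb c)
          (hf.apply_sup_sup_add_apply_sup_le hmono hka hkb d))
        (hf.apply_sup_add_apply_le hmono k c d)
    _ = _ := by abel

end IsSubmodular

theorem cardinal_le_of_add_le_add_right {x y z : Cardinal} (h : x + z ≤ y + z) (hzy : z ≤ y) :
    x ≤ y := by
  rcases lt_or_ge y Cardinal.aleph0 with hy | hy
  · exact (Cardinal.add_le_add_iff_of_lt_aleph0 (hzy.trans_lt hy)).1 h
  · exact (self_le_add_right x z).trans (h.trans_eq (Cardinal.add_eq_left hy hzy))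

section Rank

universe u v

variable {R : Type u} {V : Type v} [Ring R] [HasRankNullity.{v} R]
  [AddCommGroup V] [Module R V]

theorem isSubmodular_rank : IsSubmodular fun W : Submodule R V => Module.rank R W :=
  fun A B => (Submodule.rank_sup_add_rank_inf_eq A B).le

theorem rank_common_information_le {A B W : Submodule R V} (hWA : W ≤ A) (hWB : W ≤ B)
    (C D : Submodule R V) :
    Module.rank R W + Module.rank R ↥(C ⊔ D) + Module.rank R ↥(A ⊔ B ⊔ C)
      + Module.rank R ↥(A ⊔ B ⊔ D)
    ≤ Module.rank R ↥(A ⊔ C) + Module.rank R ↥(A ⊔ D) + Module.rank R ↥(B ⊔ C)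
      + Module.rank R ↥(B ⊔ D) := by
  refine cardinal_le_of_add_le_add_right
    (isSubmodular_rank.common_information_add_le (fun _ _ => Submodule.rank_mono) hWA hWB C D) ?_
  calc
    Module.rank R ↥(W ⊔ C) + Module.rank R ↥(W ⊔ D)
      ≤ Module.rank R ↥(A ⊔ C) + Module.rank R ↥(A ⊔ D) :=
        add_le_add (Submodule.rank_mono (sup_le_sup_right hWA C))
          (Submodule.rank_mono (sup_le_sup_right hWA D))
    _ ≤ _ := (self_le_add_right _ _).trans (self_le_add_right _ _)

theorem ingleton_subspace_rank_general (V1 V2 V3 V4 : Submodule R V) :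
    Module.rank R V1 + Module.rank R V2 + Module.rank R ↥(V3 ⊔ V4)
      + Module.rank R ↥(V1 ⊔ V2 ⊔ V3) + Module.rank R ↥(V1 ⊔ V2 ⊔ V4)
    ≤ Module.rank R ↥(V1 ⊔ V2) + Module.rank R ↥(V1 ⊔ V3)
      + Module.rank R ↥(V1 ⊔ V4) + Module.rank R ↥(V2 ⊔ V3)
      + Module.rank R ↥(V2 ⊔ V4) := by
  have common_information :=
    rank_common_information_le (inf_le_left : V1 ⊓ V2 ≤ V1) inf_le_right V3 V4
  rw [← Submodule.rank_sup_add_rank_inf_eq V1 V2]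
  simpa only [add_assoc] using add_le_add_right common_information (Module.rank R ↥(V1 ⊔ V2))

end Rank

/-- **Ingleton's inequality for subspace ranks**: for any four subspaces
`V1, V2, V3, V4` of a finite-dimensional vector space over a field,
`dim(V1+V2) + dim(V1+V3) + dim(V1+V4) + dim(V2+V3) + dim(V2+V4)
  ≥ dim V1 + dim V2 + dim(V3+V4) + dim(V1+V2+V3) + dim(V1+V2+V4)`. -/
theorem ingleton_subspace_rank {K V : Type*} [Field K] [AddCommGroup V] [Module K V]
    [FiniteDimensional K V] (V1 V2 V3 V4 : Submodule K V) :
    Module.finrank K V1 + Module.finrank K V2 + Module.finrank K ↥(V3 ⊔ V4)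
      + Module.finrank K ↥(V1 ⊔ V2 ⊔ V3) + Module.finrank K ↥(V1 ⊔ V2 ⊔ V4)
    ≤ Module.finrank K ↥(V1 ⊔ V2) + Module.finrank K ↥(V1 ⊔ V3)
      + Module.finrank K ↥(V1 ⊔ V4) + Module.finrank K ↥(V2 ⊔ V3)
      + Module.finrank K ↥(V2 ⊔ V4) := by
  have h := ingleton_subspace_rank_general V1 V2 V3 V4
  simpa only [← Module.finrank_eq_rank, ← Nat.cast_add, Nat.cast_le] using h
end

section
/- The elemental Shannon inequalities generate all Shannon inequalities: let f be a real-valued function on subsets of a finite index set Ω with f(∅) = 0. Suppose (i) for every element i of Ω, f(Ω \ {i}) ≤ f(Ω), and (ii) for every pair of distinct elements i, j of Ω and every subset U ⊆ Ω \ {i,j}, f(U ∪ {i}) + f(U ∪ {j}) ≥ f(U ∪ {i,j}) + f(U). Then f satisfies all monotonicity inequalities f(S \ T) ≤ f(S) for all subsets S, T ⊆ Ω, and all submodularity inequalities f(S ∩ T) + f(S ∪ T) ≤ f(S) + f(T) for all subsets S, T ⊆ Ω. -/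
/-!
Submodularity is the statement that the marginal gain of adding an element shrinks as the set it is
added to grows. The elemental inequalities (ii) say this for one covering step `U ⊂ U ∪ {j}`, and
chaining covering steps gives it for all inclusions. Adding the elements of `T \ S` one at a time to
both `S ∩ T` and `S` then yields submodularity; and since every gain is at least the corresponding
gain at the top set, which is nonnegative by (i), the function is monotone.
-/

open Finset

section MarginalGain

variable {α β : Type*} [DecidableEq α] [AddCommGroup β]

/-- The marginal gain of the element `i` at the set `S` under the set function `f`, i.e. the
discrete derivative of `f` in direction `i`. Erasing `i` from `S` makes the gain insensitive to
whether `i ∈ S`, so that diminishing returns become plain antitonicity in `S`. -/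
def marginalGain (f : Finset α → β) (i : α) (S : Finset α) : β :=
  f (insert i S) - f (S.erase i)

lemma marginalGain_of_notMem (f : Finset α → β) {i : α} {S : Finset α} (hi : i ∉ S) :
    marginalGain f i S = f (insert i S) - f S := by
  rw [marginalGain, erase_eq_of_notMem hi]

lemma marginalGain_insert_self (f : Finset α → β) (i : α) (S : Finset α) :
    marginalGain f i (insert i S) = marginalGain f i S := by
  simp [marginalGain]

variable [PartialOrder β] [IsOrderedAddMonoid β] {f : Finset α → β}

theorem antitone_marginalGain
    (hf : ∀ i j, i ≠ j → ∀ U, i ∉ U → j ∉ U →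
      f (insert i (insert j U)) + f U ≤ f (insert i U) + f (insert j U)) (i : α) :
    Antitone (marginalGain f i) := by
  refine antitone_iff_forall_insert_le.2 fun S j hj ↦ ?_
  obtain rfl | hij := eq_or_ne i j
  · exact (marginalGain_insert_self f i S).le
  · have hinsert : insert i (S.erase i) = insert i S := by grind
    have h := hf i j hij (S.erase i) (notMem_erase i S) (mt mem_of_mem_erase hj)
    rw [insert_comm i j, hinsert, insert_comm j i] at h
    rwa [marginalGain, marginalGain, erase_insert_of_ne hij.symm, sub_le_sub_iff]

theorem union_sub_le_union_sub_of_antitone_marginalGain (hf : ∀ i, Antitone (marginalGain f i))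
    {A B E : Finset α} (hAB : A ⊆ B) (hBE : Disjoint B E) :
    f (B ∪ E) - f B ≤ f (A ∪ E) - f A := by
  induction E using Finset.induction_on with
  | empty => simp
  | insert i E hiE ih =>
    obtain ⟨hiB, hBE⟩ := disjoint_insert_right.1 hBE
    have hiBE : i ∉ B ∪ E := by simp [hiB, hiE]
    have hABE : A ∪ E ⊆ B ∪ E := union_subset_union_left hAB
    have hgain := hf i hABE
    rw [marginalGain_of_notMem f hiBE, marginalGain_of_notMem f (mt (@hABE i) hiBE)] at hgain
    rw [union_insert, union_insert]
    simpa only [sub_add_sub_cancel] using add_le_add hgain (ih hBE)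

theorem inter_add_union_le_of_antitone_marginalGain (hf : ∀ i, Antitone (marginalGain f i))
    (S T : Finset α) : f (S ∩ T) + f (S ∪ T) ≤ f S + f T := by
  have hT : S ∩ T ∪ T \ S = T := by rw [inter_comm, union_comm, sdiff_union_inter]
  have h : f (S ∪ T) - f S ≤ f T - f (S ∩ T) := by
    simpa only [union_sdiff_self_eq_union, hT] using
      union_sub_le_union_sub_of_antitone_marginalGain hf
        (inter_subset_left : S ∩ T ⊆ S) (disjoint_sdiff : Disjoint S (T \ S))
  rwa [sub_le_sub_iff, add_comm, add_comm (f T)] at h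

theorem monotone_of_antitone_marginalGain [Fintype α] (hf : ∀ i, Antitone (marginalGain f i))
    (hmono : ∀ i, f (univ.erase i) ≤ f univ) : Monotone f := by
  refine monotone_iff_forall_le_insert.2 fun S i hi ↦ ?_
  have htop : 0 ≤ marginalGain f i univ := by simpa [marginalGain] using hmono i
  have hgain := htop.trans (hf i (subset_univ S))
  rwa [marginalGain_of_notMem f hi, sub_nonneg] at hgain

end MarginalGain

theorem elemental_shannon_inequalities_generate_general {Ω β : Type*} [Fintype Ω] [DecidableEq Ω]
    [AddCommGroup β] [PartialOrder β] [IsOrderedAddMonoid β] (f : Finset Ω → β)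
    (hmono : ∀ i : Ω, f (univ.erase i) ≤ f univ)
    (hsub : ∀ i j : Ω, i ≠ j → ∀ U : Finset Ω, U ⊆ univ \ {i, j} →
      f (insert i (insert j U)) + f U ≤ f (insert i U) + f (insert j U)) :
    (∀ S T : Finset Ω, f (S \ T) ≤ f S) ∧
      (∀ S T : Finset Ω, f (S ∩ T) + f (S ∪ T) ≤ f S + f T) := by
  have hgain : ∀ i, Antitone (marginalGain f i) :=
    antitone_marginalGain fun i j hij U hi hj ↦
      hsub i j hij U (by simp [subset_sdiff, hi, hj])
  exact ⟨fun S T ↦ monotone_of_antitone_marginalGain hgain hmono sdiff_subset,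
    inter_add_union_le_of_antitone_marginalGain hgain⟩

/-- The **elemental Shannon inequalities generate all Shannon inequalities**:
if a set function `f` on subsets of a finite set `Ω` with `f ∅ = 0` satisfies
(i) the elemental monotonicity inequalities `f (Ω \ {i}) ≤ f Ω` for every `i ∈ Ω`, and
(ii) the elemental submodularity inequalities
`f (U ∪ {i}) + f (U ∪ {j}) ≥ f (U ∪ {i,j}) + f U` for all distinct `i, j` and all
`U ⊆ Ω \ {i,j}`, then `f` satisfies all monotonicity inequalities `f (S \ T) ≤ f S`
and all submodularity inequalities `f (S ∩ T) + f (S ∪ T) ≤ f S + f T`. -/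
theorem elemental_shannon_inequalities_generate {Ω : Type*} [Fintype Ω] [DecidableEq Ω]
    (f : Finset Ω → ℝ) (h0 : f ∅ = 0)
    (hmono : ∀ i : Ω, f (Finset.univ.erase i) ≤ f Finset.univ)
    (hsub : ∀ i j : Ω, i ≠ j → ∀ U : Finset Ω, U ⊆ Finset.univ \ {i, j} →
      f (insert i (insert j U)) + f U ≤ f (insert i U) + f (insert j U)) :
    (∀ S T : Finset Ω, f (S \ T) ≤ f S) ∧
      (∀ S T : Finset Ω, f (S ∩ T) + f (S ∪ T) ≤ f S + f T) :=
  elemental_shannon_inequalities_generate_general f hmono hsub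
end

section
/- The closure of the set of entropy vectors of n jointly distributed finite random variables is a convex cone: letting Γ*_n ⊆ ℝ^{2^n - 1} be the set of all vectors whose components are the Shannon entropies H((Xi)_{i∈S}) over nonempty subsets S of {1,...,n}, for some finite random variables X1,...,Xn on a common probability space, the topological closure of Γ*_n is convex and closed under multiplication by nonnegative scalars. -/
/-!
Juxtaposing independent families adds their entropy vectors, so `Γ*_n` is an additive monoid. If a
single event of probability `p`, independent of the family, decides whether all of its variables
are revealed or all are replaced by one erasure symbol, then an entropy vector `v` becomes
`p • v + binEntropy p • 1`. Applied with `p = c / k` to `k` independent copies of a family, this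
gives `c • v + binEntropy (c / k) • 1`, and the error term vanishes as `k → ∞`. Hence the closure
of `Γ*_n` is stable under nonnegative scaling as well as under addition, so it is a convex cone.
-/

open MeasureTheory ProbabilityTheory

/-- Joint Shannon entropy `H(X_S)` of the subfamily indexed by the finite set `S`
of a family `X` of finite-valued random variables. -/
noncomputable def jEnt {Ω : Type*} [MeasurableSpace Ω] {ι : Type*} [DecidableEq ι]
    {E : ι → Type*} [∀ i, Fintype (E i)] (μ : Measure Ω) (X : ∀ i, Ω → E i)
    (S : Finset ι) : ℝ :=
  ∑ e : ((i : S) → E i.1), Real.negMulLog (μ {ω | ∀ i : S, X i.1 ω = e i}).toReal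

/-- `Γ*_n`: the set of entropy vectors (indexed by the nonempty subsets of
`{1, ..., n}`, i.e. vectors in `ℝ^{2^n - 1}`) achievable by `n` jointly distributed
finite random variables on a common probability space. -/
def entropyVectorSet (n : ℕ) : Set ({S : Finset (Fin n) // S.Nonempty} → ℝ) :=
  {v | ∃ (Ω : Type) (mΩ : MeasurableSpace Ω) (μ : Measure Ω)
      (_ : IsProbabilityMeasure μ)
      (E : Fin n → Type) (hE : ∀ i, Fintype (E i)) (mE : ∀ i, MeasurableSpace (E i))
      (_ : ∀ i, @MeasurableSingletonClass (E i) (mE i))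
      (X : ∀ i, Ω → E i) (_ : ∀ i, @Measurable Ω (E i) mΩ (mE i) (X i)),
      ∀ S : {S : Finset (Fin n) // S.Nonempty},
        v S = @jEnt Ω mΩ (Fin n) (instDecidableEqFin n) E hE μ X S.1}

open Filter Real
open scoped Topology unitInterval

theorem smul_mem_closure_of_smul_add_mem {V : Type*} [AddCommMonoid V] [Module ℝ V]
    [TopologicalSpace V] [ContinuousAdd V] {M : AddSubmonoid V} {r : ℝ → V}
    (hr : Tendsto r (𝓝[I] 0) (𝓝 0)) (hM : ∀ v ∈ M, ∀ p ∈ I, p • v + r p ∈ M)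
    {c : ℝ} (hc : 0 ≤ c) {v : V} (hv : v ∈ M) : c • v ∈ closure (M : Set V) := by
  have hp₀ : Tendsto (fun k : ℕ ↦ c / k) atTop (𝓝 0) := tendsto_const_div_atTop_nhds_zero_nat c
  have hpI : ∀ᶠ k : ℕ in atTop, c / k ∈ I :=
    (hp₀.eventually_le_const one_pos).mono fun k hk ↦ ⟨by positivity, hk⟩
  have hlim : Tendsto (fun k : ℕ ↦ c • v + r (c / k)) atTop (𝓝 (c • v)) := by
    simpa using (hr.comp (tendsto_nhdsWithin_iff.2 ⟨hp₀, hpI⟩)).const_add (c • v)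
  refine mem_closure_of_tendsto hlim ?_
  filter_upwards [hpI, eventually_ne_atTop 0] with k hk hk₀
  have hscale : (c / k) • k • v = c • v := by
    rw [← Nat.cast_smul_eq_nsmul ℝ, smul_smul, div_mul_cancel₀ c (Nat.cast_ne_zero.2 hk₀)]
  rw [← hscale]
  exact hM (k • v) (nsmul_mem hv k) (c / k) hk

section ShannonEntropy

variable {Ω Ω' α β : Type*} [MeasurableSpace Ω] [MeasurableSpace Ω'] [Fintype α] [Fintype β]

/-- The Shannon entropy (in nats) of a single random variable `Z` with values in a finite type. -/
noncomputable def shannonEntropy (μ : Measure Ω) (Z : Ω → α) : ℝ :=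
  ∑ a, negMulLog (μ.real (Z ⁻¹' {a}))

theorem shannonEntropy_comp_of_injective (μ : Measure Ω) (Z : Ω → α) {f : α → β}
    (hf : f.Injective) : shannonEntropy μ (f ∘ Z) = shannonEntropy μ Z := by
  refine (Fintype.sum_of_injective f hf _ _ (fun b hb ↦ ?_) fun a ↦ ?_).symm
  · have hempty : f ∘ Z ⁻¹' {b} = ∅ :=
      Set.preimage_singleton_eq_empty.2 fun ⟨ω, hω⟩ ↦ hb ⟨Z ω, hω⟩
    simp [hempty]
  · rw [Set.preimage_comp, ← Set.image_singleton, hf.preimage_image]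

theorem sum_measureReal_preimage_singleton_eq_one [MeasurableSpace α] [MeasurableSingletonClass α]
    (μ : Measure Ω) [IsProbabilityMeasure μ] {Z : Ω → α} (hZ : Measurable Z) :
    ∑ a, μ.real (Z ⁻¹' {a}) = 1 := by
  simpa using sum_measureReal_preimage_singleton (μ := μ) Finset.univ
    fun a _ ↦ hZ (measurableSet_singleton a)

theorem shannonEntropy_prodMap [MeasurableSpace α] [MeasurableSingletonClass α]
    [MeasurableSpace β] [MeasurableSingletonClass β] (μ : Measure Ω) (ν : Measure Ω')
    [IsProbabilityMeasure μ] [IsProbabilityMeasure ν] {Y : Ω → α} {Z : Ω' → β}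
    (hY : Measurable Y) (hZ : Measurable Z) :
    shannonEntropy (μ.prod ν) (Prod.map Y Z) = shannonEntropy μ Y + shannonEntropy ν Z := by
  have hlaw (a : α) (b : β) : (μ.prod ν).real (Prod.map Y Z ⁻¹' {(a, b)}) =
      μ.real (Y ⁻¹' {a}) * ν.real (Z ⁻¹' {b}) := by
    rw [← Set.singleton_prod_singleton, Set.preimage_prod_map_prod, measureReal_prod_prod]
  simp only [shannonEntropy, Fintype.sum_prod_type, hlaw, negMulLog_mul, Finset.sum_add_distrib,
    ← Finset.mul_sum, ← Finset.sum_mul, sum_measureReal_preimage_singleton_eq_one μ hY,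
    sum_measureReal_preimage_singleton_eq_one ν hZ, one_mul]

end ShannonEntropy

section Erasure

variable {Ω Ω' α : Type*}

open Classical in
/-- The output of an erasure channel with input `Z`: the event `A`, which lives on a separate factor
of the probability space, decides whether `Z` is revealed or erased, `none` being the erasure
symbol. -/
noncomputable def erasure (A : Set Ω') (Z : Ω → α) (ω : Ω × Ω') : Option α :=
  if ω.2 ∈ A then some (Z ω.1) else none

theorem erasure_preimage_none (A : Set Ω') (Z : Ω → α) :
    erasure A Z ⁻¹' {none} = Set.univ ×ˢ Aᶜ := by
  ext; simp [erasure]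

theorem erasure_preimage_some (A : Set Ω') (Z : Ω → α) (a : α) :
    erasure A Z ⁻¹' {some a} = (Z ⁻¹' {a}) ×ˢ A := by
  ext; simp [erasure, and_comm]

variable [MeasurableSpace Ω] [MeasurableSpace Ω'] [MeasurableSpace α] [MeasurableSingletonClass α]

theorem measurable_erasure [Countable α] [MeasurableSpace (Option α)] {A : Set Ω'}
    (hA : MeasurableSet A) {Z : Ω → α} (hZ : Measurable Z) : Measurable (erasure A Z) :=
  .ite (measurable_snd hA) ((measurable_of_countable some).comp (hZ.comp measurable_fst))
    measurable_const

theorem shannonEntropy_erasure [Fintype α] (μ : Measure Ω) (ν : Measure Ω')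
    [IsProbabilityMeasure μ] [IsProbabilityMeasure ν] {A : Set Ω'} (hA : MeasurableSet A)
    {Z : Ω → α} (hZ : Measurable Z) :
    shannonEntropy (μ.prod ν) (erasure A Z) =
      ν.real A * shannonEntropy μ Z + binEntropy (ν.real A) := by
  simp only [shannonEntropy, Fintype.sum_option, erasure_preimage_none, erasure_preimage_some,
    measureReal_prod_prod, probReal_univ, one_mul, probReal_compl_eq_one_sub hA, negMulLog_mul,
    Finset.sum_add_distrib, ← Finset.mul_sum, ← Finset.sum_mul,
    sum_measureReal_preimage_singleton_eq_one μ hZ, binEntropy_eq_negMulLog_add_negMulLog_one_sub]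
  ring

end Erasure

section JointEntropy

variable {Ω Ω' ι : Type*} [MeasurableSpace Ω] [MeasurableSpace Ω'] [DecidableEq ι]
  {E F : ι → Type*} [∀ i, Fintype (E i)] [∀ i, Fintype (F i)]

theorem jEnt_eq_shannonEntropy (μ : Measure Ω) (X : ∀ i, Ω → E i) (S : Finset ι) :
    jEnt μ X S = shannonEntropy μ fun ω (i : S) ↦ X i ω := by
  simp only [jEnt, shannonEntropy, Measure.real, Set.preimage, Set.mem_singleton_iff, funext_iff]

variable [∀ i, MeasurableSpace (E i)] [∀ i, MeasurableSingletonClass (E i)]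
  (μ : Measure Ω) (ν : Measure Ω') [IsProbabilityMeasure μ] [IsProbabilityMeasure ν]
  {X : ∀ i, Ω → E i}

theorem jEnt_prodMap [∀ i, MeasurableSpace (F i)] [∀ i, MeasurableSingletonClass (F i)]
    {Y : ∀ i, Ω' → F i} (hX : ∀ i, Measurable (X i)) (hY : ∀ i, Measurable (Y i)) (S : Finset ι) :
    jEnt (μ.prod ν) (fun i ↦ Prod.map (X i) (Y i)) S = jEnt μ X S + jEnt ν Y S := by
  have hpair : Function.Injective
      fun (e : (∀ i : S, E i) × (∀ i : S, F i)) (i : S) ↦ (e.1 i, e.2 i) := fun e f h ↦ by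
    simpa [funext_iff, Prod.ext_iff, forall_and] using h
  simp only [jEnt_eq_shannonEntropy]
  rw [← shannonEntropy_prodMap μ ν (measurable_pi_lambda _ fun i : S ↦ hX i)
    (measurable_pi_lambda _ fun i : S ↦ hY i), ← shannonEntropy_comp_of_injective _ _ hpair]
  rfl

theorem jEnt_erasure (hX : ∀ i, Measurable (X i)) {A : Set Ω'} (hA : MeasurableSet A)
    {S : Finset ι} (hS : S.Nonempty) :
    jEnt (μ.prod ν) (fun i ↦ erasure A (X i)) S =
      ν.real A * jEnt μ X S + binEntropy (ν.real A) := by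
  have : Nonempty S := hS.to_subtype
  have hmap : Function.Injective
      fun (o : Option (∀ i : S, E i)) (i : S) ↦ o.map fun e ↦ e i := fun o o' h ↦ by
    cases o <;> cases o' <;> simp_all [funext_iff]
  have herasure : (fun ω (i : S) ↦ erasure A (X i) ω) =
      (fun (o : Option (∀ i : S, E i)) (i : S) ↦ o.map fun e ↦ e i) ∘
        erasure A fun ω (i : S) ↦ X i ω := by
    ext ω i : 2
    by_cases hω : ω.2 ∈ A <;> simp [erasure, hω]
  rw [jEnt_eq_shannonEntropy, herasure, shannonEntropy_comp_of_injective _ _ hmap,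
    shannonEntropy_erasure μ ν hA (measurable_pi_lambda _ fun i : S ↦ hX i),
    jEnt_eq_shannonEntropy]

end JointEntropy

section EntropyVectorSet

variable {n : ℕ} {v w : {S : Finset (Fin n) // S.Nonempty} → ℝ}

theorem zero_mem_entropyVectorSet : 0 ∈ entropyVectorSet n :=
  ⟨Unit, inferInstance, .dirac (), inferInstance, fun _ ↦ Unit, inferInstance, inferInstance,
    inferInstance, fun _ ↦ id, fun _ ↦ measurable_id, fun S ↦ by simp [jEnt]⟩

theorem add_mem_entropyVectorSet (hv : v ∈ entropyVectorSet n) (hw : w ∈ entropyVectorSet n) :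
    v + w ∈ entropyVectorSet n := by
  obtain ⟨Ω, _, μ, _, E, _, _, _, X, hX, hv⟩ := hv
  obtain ⟨Ω', _, ν, _, F, _, _, _, Y, hY, hw⟩ := hw
  refine ⟨Ω × Ω', inferInstance, μ.prod ν, inferInstance, fun i ↦ E i × F i, inferInstance,
    inferInstance, inferInstance, fun i ↦ Prod.map (X i) (Y i), fun i ↦ (hX i).prodMap (hY i),
    fun S ↦ ?_⟩
  rw [Pi.add_apply, hv, hw, jEnt_prodMap μ ν hX hY]

theorem smul_add_binEntropy_mem_entropyVectorSet (hv : v ∈ entropyVectorSet n) {p : ℝ}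
    (hp : p ∈ I) : p • v + binEntropy p • 1 ∈ entropyVectorSet n := by
  obtain ⟨Ω, _, μ, _, E, _, _, _, X, hX, hv⟩ := hv
  have hA : (volume : Measure I).real (Set.Iic ⟨p, hp⟩) = p := by
    simp [Measure.real, hp.1]
  let _ (i : Fin n) : MeasurableSpace (Option (E i)) := ⊤
  refine ⟨Ω × I, inferInstance, μ.prod volume, inferInstance, fun i ↦ Option (E i), inferInstance,
    inferInstance, fun _ ↦ ⟨fun _ ↦ trivial⟩, fun i ↦ erasure (Set.Iic ⟨p, hp⟩) (X i),
    fun i ↦ measurable_erasure measurableSet_Iic (hX i), fun S ↦ ?_⟩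
  rw [jEnt_erasure μ volume hX measurableSet_Iic S.2, hA, ← hv]
  simp

/-- `Γ*_n` as an additive monoid, which makes its natural multiples and its topological closure
available as algebraic objects. -/
def entropyVectorAddSubmonoid (n : ℕ) : AddSubmonoid ({S : Finset (Fin n) // S.Nonempty} → ℝ) where
  carrier := entropyVectorSet n
  zero_mem' := zero_mem_entropyVectorSet
  add_mem' := add_mem_entropyVectorSet

theorem smul_mem_closure_entropyVectorSet {c : ℝ} (hc : 0 ≤ c) (hv : v ∈ entropyVectorSet n) :
    c • v ∈ closure (entropyVectorSet n) := by
  have herror : Tendsto (fun p ↦ binEntropy p • (1 : {S : Finset (Fin n) // S.Nonempty} → ℝ))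
      (𝓝[I] 0) (𝓝 0) :=
    tendsto_nhdsWithin_of_tendsto_nhds <|
      (binEntropy_continuous.smul continuous_const).tendsto' 0 0 (by simp)
  exact smul_mem_closure_of_smul_add_mem (M := entropyVectorAddSubmonoid n) herror
    (fun _ hw _ hp ↦ smul_add_binEntropy_mem_entropyVectorSet hw hp) hc hv

end EntropyVectorSet

/-- The **closure of the set of entropy vectors of `n` jointly distributed finite
random variables is a convex cone**: the topological closure of `Γ*_n` is convex and
closed under multiplication by nonnegative scalars. -/
theorem closure_entropyVectorSet_convex_cone (n : ℕ) :
    Convex ℝ (closure (entropyVectorSet n)) ∧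
      ∀ c : ℝ, 0 ≤ c → ∀ v ∈ closure (entropyVectorSet n),
        c • v ∈ closure (entropyVectorSet n) := by
  have hsmul (c : ℝ) (hc : 0 ≤ c) (v) (hv : v ∈ closure (entropyVectorSet n)) :
      c • v ∈ closure (entropyVectorSet n) := by
    simpa only [closure_closure] using map_mem_closure (continuous_const_smul c) hv
      fun _ hw ↦ smul_mem_closure_entropyVectorSet hc hw
  have hadd {v w} (hv : v ∈ closure (entropyVectorSet n)) (hw : w ∈ closure (entropyVectorSet n)) :
      v + w ∈ closure (entropyVectorSet n) :=
    (entropyVectorAddSubmonoid n).topologicalClosure.add_mem hv hw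
  exact ⟨fun v hv w hw a b ha hb _ ↦ hadd (hsmul a ha v hv) (hsmul b hb w hw), hsmul⟩
end

section
/- Post-selection lemma (generalisation of Fine's theorem): let X, A, B be jointly distributed random variables with values in Fin n, a finite type 𝒜, and a finite type ℬ respectively, such that X is independent of B and P(X = x) > 0 for every x. Then there exists a joint distribution Q of random variables (A_1, ..., A_n, B'), with each A_x valued in 𝒜 and B' valued in ℬ, such that for every x ∈ {1,...,n} the marginal distribution of (A_x, B') under Q equals the conditional distribution of (A, B) given X = x; such Q may be taken as Q(a_1,...,a_n, b) = [∏_{x=1}^n P(A = a_x | B = b, X = x)] · P(B = b). -/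
open Classical in
/-- Probability of an event `s` on a finite probability space with mass function `p`. -/
noncomputable def prEvent {Ω : Type*} [Fintype Ω] (p : Ω → ℝ) (s : Set Ω) : ℝ :=
  ∑ ω, if ω ∈ s then p ω else 0

/-!
The conditional laws of `(A, B)` given `X = x` all have the same `B`-marginal: by independence it is
the law of `B`. Laws on `𝒜 × ℬ` with a common marginal on `ℬ` can be glued over it, by drawing `b`
from the common marginal and then the `A_x` independently, each from its own conditional law
given `b`.
-/

section PiSum

variable {ι R : Type*} {α : ι → Type*} [Fintype ι] [DecidableEq ι] [∀ i, Fintype (α i)]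
  [CommSemiring R]

theorem sum_pi_prod_ite_eq [∀ i, DecidableEq (α i)] (c : ∀ i, α i → R) (i : ι) (a : α i)
    (hc : ∀ j ≠ i, ∑ a', c j a' = 1) :
    (∑ f : ∀ j, α j, if f i = a then ∏ j, c j (f j) else 0) = c i a := by
  calc (∑ f : ∀ j, α j, if f i = a then ∏ j, c j (f j) else 0)
      = ∏ j, ∑ a' ∈ Function.update (fun _ => Finset.univ) i {a} j, c j a' := by
        rw [Finset.prod_univ_sum, Fintype.piFinset_update_singleton_eq_filter_piFinset_eq _ i
          (Finset.mem_univ a), Fintype.piFinset_univ, Finset.sum_filter]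
    _ = c i a := by
        rw [Fintype.prod_eq_single i fun j hj => by rw [Function.update_of_ne hj, hc j hj],
          Function.update_self, Finset.sum_singleton]

end PiSum

/-- The conditionally independent coupling of weights `μ i` on `α i × β` with common marginal `ν`
on `β`: given `b`, the coordinates in the `α i` are independent with laws `μ i · b / ν b`. Where
`ν b = 0` the quotients take the junk value `0`, and the factor `ν b` makes the weight vanish. -/
noncomputable def condIndepCoupling {ι β 𝕜 : Type*} {α : ι → Type*} [Fintype ι] [Semifield 𝕜]
    (μ : ∀ i, α i → β → 𝕜) (ν : β → 𝕜) (q : (∀ i, α i) × β) : 𝕜 :=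
  (∏ i, μ i (q.1 i) q.2 / ν q.2) * ν q.2

section Coupling

variable {ι β 𝕜 : Type*} {α : ι → Type*} [Fintype ι] [Semifield 𝕜]
  {μ : ∀ i, α i → β → 𝕜} {ν : β → 𝕜}

theorem condIndepCoupling_nonneg [LinearOrder 𝕜] [IsStrictOrderedRing 𝕜]
    (hμ : ∀ i a b, 0 ≤ μ i a b) (hν : ∀ b, 0 ≤ ν b) (q : (∀ i, α i) × β) :
    0 ≤ condIndepCoupling μ ν q :=
  mul_nonneg (Finset.prod_nonneg fun _ _ => div_nonneg (hμ _ _ _) (hν _)) (hν _)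

variable [DecidableEq ι] [∀ i, Fintype (α i)]

theorem sum_condIndepCoupling_left {b : β} (hμν : ∀ i, ∑ a, μ i a b = ν b) :
    ∑ f, condIndepCoupling μ ν (f, b) = ν b := by
  rcases eq_or_ne (ν b) 0 with hb | hb
  · simp [condIndepCoupling, hb]
  · calc ∑ f, condIndepCoupling μ ν (f, b)
        = (∏ i, ∑ a, μ i a b / ν b) * ν b := by
          simp only [condIndepCoupling, ← Finset.sum_mul, Fintype.prod_sum]
      _ = ν b := by simp only [← Finset.sum_div, hμν, div_self hb, Finset.prod_const_one, one_mul]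

theorem sum_condIndepCoupling [Fintype β] (hμν : ∀ i b, ∑ a, μ i a b = ν b) :
    ∑ q, condIndepCoupling μ ν q = ∑ b, ν b := by
  rw [Fintype.sum_prod_type_right]
  exact Finset.sum_congr rfl fun b _ => sum_condIndepCoupling_left (hμν · b)

theorem condIndepCoupling_marginal [LinearOrder 𝕜] [IsStrictOrderedRing 𝕜]
    [∀ i, DecidableEq (α i)] {b : β} (hμν : ∀ i, ∑ a, μ i a b = ν b) {i : ι}
    (hμ : ∀ a, 0 ≤ μ i a b) (a : α i) :
    (∑ f : ∀ j, α j, if f i = a then condIndepCoupling μ ν (f, b) else 0) = μ i a b := by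
  rcases eq_or_ne (ν b) 0 with hb | hb
  · have hμ_zero : μ i a b = 0 :=
      (Finset.sum_eq_zero_iff_of_nonneg fun a _ => hμ a).1 ((hμν i).trans hb) a (Finset.mem_univ a)
    simp [condIndepCoupling, hb, hμ_zero]
  · have hcond (j : ι) : ∑ a', μ j a' b / ν b = 1 := by
      rw [← Finset.sum_div, hμν, div_self hb]
    simp only [condIndepCoupling, ← ite_zero_mul, ← Finset.sum_mul]
    rw [sum_pi_prod_ite_eq (fun j a' => μ j a' b / ν b) i a fun j _ => hcond j,
      div_mul_cancel₀ _ hb]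

end Coupling

section Probability

variable {Ω ι 𝒜 ℬ : Type*} [Fintype Ω] {p : Ω → ℝ}

theorem prEvent_nonneg (hp : ∀ ω, 0 ≤ p ω) (s : Set Ω) : 0 ≤ prEvent p s :=
  Finset.sum_nonneg fun ω _ => by
    split_ifs
    exacts [hp ω, le_rfl]

theorem sum_prEvent_eq_and [Fintype 𝒜] (p : Ω → ℝ) (A : Ω → 𝒜) (s : Set Ω) :
    ∑ a, prEvent p {ω | A ω = a ∧ ω ∈ s} = prEvent p s := by
  classical
  unfold prEvent
  rw [Finset.sum_comm]
  exact Finset.sum_congr rfl fun ω _ => by by_cases hω : ω ∈ s <;> simp [hω]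

theorem sum_prEvent_eq [Fintype ℬ] (p : Ω → ℝ) (B : Ω → ℬ) :
    ∑ b, prEvent p {ω | B ω = b} = ∑ ω, p ω := by
  have huniv : prEvent p Set.univ = ∑ ω, p ω := by simp [prEvent]
  simpa only [Set.mem_univ, and_true, huniv] using sum_prEvent_eq_and p B Set.univ

/-- The conditional probability `P(A = a, B = b | X = x)`, with the junk value `0` when
`P(X = x) = 0`. -/
noncomputable def condJoint (p : Ω → ℝ) (X : Ω → ι) (A : Ω → 𝒜) (B : Ω → ℬ)
    (x : ι) (a : 𝒜) (b : ℬ) : ℝ :=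
  prEvent p {ω | A ω = a ∧ B ω = b ∧ X ω = x} / prEvent p {ω | X ω = x}

theorem condJoint_nonneg (hp : ∀ ω, 0 ≤ p ω) (X : Ω → ι) (A : Ω → 𝒜) (B : Ω → ℬ)
    (x : ι) (a : 𝒜) (b : ℬ) : 0 ≤ condJoint p X A B x a b :=
  div_nonneg (prEvent_nonneg hp _) (prEvent_nonneg hp _)

variable {X : Ω → ι} {B : Ω → ℬ} {x : ι} {b : ℬ}

theorem sum_condJoint_of_indep [Fintype 𝒜]
    (hindep : prEvent p {ω | X ω = x ∧ B ω = b}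
      = prEvent p {ω | X ω = x} * prEvent p {ω | B ω = b})
    (hx : prEvent p {ω | X ω = x} ≠ 0) (A : Ω → 𝒜) :
    ∑ a, condJoint p X A B x a b = prEvent p {ω | B ω = b} :=
  calc ∑ a, condJoint p X A B x a b
      = prEvent p {ω | B ω = b ∧ X ω = x} / prEvent p {ω | X ω = x} := by
        simp only [condJoint, ← Finset.sum_div]
        exact congrArg (· / _) (sum_prEvent_eq_and p A {ω | B ω = b ∧ X ω = x})
    _ = prEvent p {ω | B ω = b} := by
        simp only [and_comm (a := B _ = b), hindep, mul_div_cancel_left₀ _ hx]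

theorem condJoint_div_of_indep
    (hindep : prEvent p {ω | X ω = x ∧ B ω = b}
      = prEvent p {ω | X ω = x} * prEvent p {ω | B ω = b}) (A : Ω → 𝒜) (a : 𝒜) :
    condJoint p X A B x a b / prEvent p {ω | B ω = b}
      = prEvent p {ω | A ω = a ∧ B ω = b ∧ X ω = x} / prEvent p {ω | B ω = b ∧ X ω = x} := by
  rw [condJoint, div_div, ← hindep]
  simp only [and_comm (a := X _ = x)]

end Probability

theorem post_selection_lemma_general {ι Ω 𝒜 ℬ : Type*} [Fintype ι] [Fintype Ω] [Fintype 𝒜]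
    [Fintype ℬ] [DecidableEq ι] [DecidableEq 𝒜]
    (p : Ω → ℝ) (hp0 : ∀ ω, 0 ≤ p ω) (hp1 : ∑ ω, p ω = 1)
    (X : Ω → ι) (A : Ω → 𝒜) (B : Ω → ℬ)
    (hindep : ∀ (x : ι) (b : ℬ),
      prEvent p {ω | X ω = x ∧ B ω = b}
        = prEvent p {ω | X ω = x} * prEvent p {ω | B ω = b})
    (hpos : ∀ x : ι, 0 < prEvent p {ω | X ω = x}) :
    ∃ Q : (ι → 𝒜) × ℬ → ℝ,
      (∀ q, 0 ≤ Q q) ∧ (∑ q, Q q = 1) ∧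
      (∀ (x : ι) (a : 𝒜) (b : ℬ),
        (∑ f : ι → 𝒜, if f x = a then Q (f, b) else 0)
          = prEvent p {ω | A ω = a ∧ B ω = b ∧ X ω = x} / prEvent p {ω | X ω = x}) ∧
      (∀ (f : ι → 𝒜) (b : ℬ),
        Q (f, b) = (∏ x : ι,
            prEvent p {ω | A ω = f x ∧ B ω = b ∧ X ω = x}
              / prEvent p {ω | B ω = b ∧ X ω = x}) * prEvent p {ω | B ω = b}) := by
  have hmarg (x : ι) (b : ℬ) : ∑ a, condJoint p X A B x a b = prEvent p {ω | B ω = b} :=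
    sum_condJoint_of_indep (hindep x b) (hpos x).ne' A
  refine ⟨condIndepCoupling (condJoint p X A B) fun b => prEvent p {ω | B ω = b}, ?_, ?_, ?_, ?_⟩
  · exact condIndepCoupling_nonneg (condJoint_nonneg hp0 X A B) fun _ => prEvent_nonneg hp0 _
  · rw [sum_condIndepCoupling hmarg, sum_prEvent_eq, hp1]
  · exact fun x a b => condIndepCoupling_marginal (μ := condJoint p X A B) (hmarg · b)
      (fun a' => condJoint_nonneg hp0 X A B x a' b) a
  · intro f b
    simp only [condIndepCoupling, condJoint_div_of_indep (hindep _ b)]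

/-- **Post-selection lemma** (generalisation of Fine's theorem): let `X, A, B` be
jointly distributed random variables on a finite probability space, valued in
`Fin n`, a finite type `𝒜` and a finite type `ℬ` respectively, with `X`
independent of `B` and `P(X = x) > 0` for every `x`. Then there is a joint
distribution `Q` of variables `(A_1, ..., A_n, B')` such that for each `x` the
marginal of `(A_x, B')` under `Q` is the conditional distribution of `(A, B)` given
`X = x`; `Q` may be taken as
`Q(a_1,...,a_n,b) = (∏ x, P(A = a_x | B = b, X = x)) * P(B = b)`. -/
theorem post_selection_lemma {n : ℕ} {Ω 𝒜 ℬ : Type*} [Fintype Ω] [Fintype 𝒜] [Fintype ℬ]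
    [DecidableEq 𝒜] [DecidableEq ℬ]
    (p : Ω → ℝ) (hp0 : ∀ ω, 0 ≤ p ω) (hp1 : ∑ ω, p ω = 1)
    (X : Ω → Fin n) (A : Ω → 𝒜) (B : Ω → ℬ)
    (hindep : ∀ (x : Fin n) (b : ℬ),
      prEvent p {ω | X ω = x ∧ B ω = b}
        = prEvent p {ω | X ω = x} * prEvent p {ω | B ω = b})
    (hpos : ∀ x : Fin n, 0 < prEvent p {ω | X ω = x}) :
    ∃ Q : (Fin n → 𝒜) × ℬ → ℝ,
      (∀ q, 0 ≤ Q q) ∧ (∑ q, Q q = 1) ∧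
      (∀ (x : Fin n) (a : 𝒜) (b : ℬ),
        (∑ f : Fin n → 𝒜, if f x = a then Q (f, b) else 0)
          = prEvent p {ω | A ω = a ∧ B ω = b ∧ X ω = x} / prEvent p {ω | X ω = x}) ∧
      (∀ (f : Fin n → 𝒜) (b : ℬ),
        Q (f, b) = (∏ x : Fin n,
            prEvent p {ω | A ω = f x ∧ B ω = b ∧ X ω = x}
              / prEvent p {ω | B ω = b ∧ X ω = x}) * prEvent p {ω | B ω = b}) :=
  post_selection_lemma_general p hp0 hp1 X A B hindep hpos
end

section
/- Entropy inequality for the classical instrumental scenario: let X and A be independent finite random variables, let Z = f(X, A) and Y = g(Z, A) for deterministic functions f and g. Then I(X : (Y,Z)) ≤ H(Z), where I denotes mutual information and H the Shannon entropy. -/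
open MeasureTheory ProbabilityTheory

/-!
Write `Y = g(Z, A)`. Given `(Y, Z)`, revealing `A` can only increase the information about `X`,
and `(Y, Z, A)` carries the same information as `(Z, A)`. Hence
`I(X : (Y, Z)) ≤ I(X : (Z, A)) = I(X : A) + I(X : Z | A)`. Independence kills the first term, and
`I(X : Z | A) ≤ H(Z | A) ≤ H(Z)`. Besides chain rules, the only input is `I(· : · | ·) ≥ 0`, which
is Gibbs' inequality applied on each fibre of the conditioning variable.
-/

section GibbsInequality

open Real

lemma sum_negMulLog_le_neg_sum_mul_log {ι : Type*} (s : Finset ι) {p q : ι → ℝ}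
    (hp : ∀ i ∈ s, 0 ≤ p i) (hq : ∀ i ∈ s, 0 ≤ q i) (hpq : ∀ i ∈ s, q i = 0 → p i = 0)
    (hsum : ∑ i ∈ s, q i ≤ ∑ i ∈ s, p i) :
    ∑ i ∈ s, negMulLog (p i) ≤ -∑ i ∈ s, p i * log (q i) := by
  have pointwise : ∀ i ∈ s, negMulLog (p i) + p i * log (q i) ≤ q i - p i := by
    intro i hi
    rcases (hp i hi).eq_or_lt with hp0 | hp_pos
    · simpa [← hp0] using hq i hi
    have hq_pos : 0 < q i := (hq i hi).lt_of_ne' fun h => hp_pos.ne' (hpq i hi h)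
    calc negMulLog (p i) + p i * log (q i) = p i * log (q i / p i) := by
          rw [log_div hq_pos.ne' hp_pos.ne', negMulLog]; ring
      _ ≤ p i * (q i / p i - 1) :=
          mul_le_mul_of_nonneg_left (log_le_sub_one_of_pos (div_pos hq_pos hp_pos)) hp_pos.le
      _ = q i - p i := by field_simp
  have summed := Finset.sum_le_sum pointwise
  rw [Finset.sum_add_distrib, Finset.sum_sub_distrib] at summed
  linarith

variable {α β : Type*} [Fintype α] [Fintype β] {p : α → β → ℝ}

lemma marginals_pos_of_ne_zero (hp : ∀ a b, 0 ≤ p a b) {a : α} {b : β} (hab : p a b ≠ 0) :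
    0 < ∑ b', p a b' ∧ 0 < ∑ a', p a' b ∧ 0 < ∑ a', ∑ b', p a' b' := by
  have hpos : 0 < p a b := (hp a b).lt_of_ne' hab
  have row_pos : 0 < ∑ b', p a b' :=
    Finset.sum_pos' (fun b' _ => hp a b') ⟨b, Finset.mem_univ b, hpos⟩
  exact ⟨row_pos, Finset.sum_pos' (fun a' _ => hp a' b) ⟨a, Finset.mem_univ a, hpos⟩,
    Finset.sum_pos' (fun a' _ => Finset.sum_nonneg fun b' _ => hp a' b')
      ⟨a, Finset.mem_univ a, row_pos⟩⟩

lemma sum_negMulLog_le_neg_sum_mul_log_marginals (hp : ∀ a b, 0 ≤ p a b) :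
    ∑ a, ∑ b, negMulLog (p a b) ≤ -∑ a, ∑ b, p a b *
      log ((∑ b', p a b') * (∑ a', p a' b) / ∑ a', ∑ b', p a' b') := by
  simp only [← Fintype.sum_prod_type']
  refine sum_negMulLog_le_neg_sum_mul_log _ (fun i _ => hp i.1 i.2) (fun i _ => ?_)
    (fun i _ hq => ?_) ?_
  · exact div_nonneg (mul_nonneg (Finset.sum_nonneg fun b _ => hp i.1 b)
      (Finset.sum_nonneg fun a _ => hp a i.2)) (Finset.sum_nonneg fun j _ => hp j.1 j.2)
  · by_contra h
    obtain ⟨row_pos, col_pos, total_pos⟩ := marginals_pos_of_ne_zero hp h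
    rw [← Fintype.sum_prod_type'] at total_pos
    exact (div_pos (mul_pos row_pos col_pos) total_pos).ne' hq
  · have sum_rows : ∑ a, ∑ b, p a b = ∑ i : α × β, p i.1 i.2 := (Fintype.sum_prod_type' p).symm
    have sum_cols : ∑ b, ∑ a, p a b = ∑ i : α × β, p i.1 i.2 := Finset.sum_comm.trans sum_rows
    have sum_mul : ∑ i : α × β, (∑ b, p i.1 b) * ∑ a, p a i.2 =
        (∑ i : α × β, p i.1 i.2) * ∑ i : α × β, p i.1 i.2 := by
      rw [Fintype.sum_prod_type' fun a b => (∑ b', p a b') * ∑ a', p a' b,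
        ← Fintype.sum_mul_sum, sum_rows, sum_cols]
    rw [← Finset.sum_div, sum_mul, mul_self_div_self]

lemma sum_negMulLog_add_negMulLog_sum_le (hp : ∀ a b, 0 ≤ p a b) :
    ∑ a, ∑ b, negMulLog (p a b) + negMulLog (∑ a, ∑ b, p a b) ≤
      ∑ a, negMulLog (∑ b, p a b) + ∑ b, negMulLog (∑ a, p a b) := by
  have gibbs := sum_negMulLog_le_neg_sum_mul_log_marginals hp
  have log_split (a : α) (b : β) :
      p a b * log ((∑ b', p a b') * (∑ a', p a' b) / ∑ a', ∑ b', p a' b') =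
        p a b * log (∑ b', p a b') + p a b * log (∑ a', p a' b) -
          p a b * log (∑ a', ∑ b', p a' b') := by
    by_cases h : p a b = 0
    · simp [h]
    obtain ⟨row_pos, col_pos, total_pos⟩ := marginals_pos_of_ne_zero hp h
    rw [log_div (by positivity) total_pos.ne', log_mul row_pos.ne' col_pos.ne']
    ring
  have sum_col : ∑ a, ∑ b, p a b * log (∑ a', p a' b) = -∑ b, negMulLog (∑ a, p a b) := by
    rw [Finset.sum_comm]
    simp only [← Finset.sum_mul, negMulLog, neg_mul, Finset.sum_neg_distrib, neg_neg]
  simp only [log_split, Finset.sum_sub_distrib, Finset.sum_add_distrib, sum_col,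
    ← Finset.sum_mul] at gibbs
  simp only [negMulLog, neg_mul, Finset.sum_neg_distrib] at gibbs ⊢
  linarith

end GibbsInequality

section ShannonInequalities

lemma prodMk_preimage_singleton {Ω E F : Type*} (X : Ω → E) (Y : Ω → F) (x : E) (y : F) :
    (fun ω => (X ω, Y ω)) ⁻¹' {(x, y)} = X ⁻¹' {x} ∩ Y ⁻¹' {y} := by
  rw [← Set.singleton_prod_singleton, Set.mk_preimage_prod]

variable {Ω E F G : Type*} [MeasurableSpace Ω] {μ : Measure Ω}

lemma sum_measureReal_preimage_singleton_inter [Fintype E] [MeasurableSpace E]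
    [MeasurableSingletonClass E] [IsFiniteMeasure μ] {X : Ω → E} (hX : Measurable X)
    (t : Set Ω) : ∑ x, μ.real (X ⁻¹' {x} ∩ t) = μ.real t := by
  have hfib (x : E) : MeasurableSet (X ⁻¹' {x}) := hX (measurableSet_singleton x)
  simpa [measureReal_restrict_apply, hfib] using
    sum_measureReal_preimage_singleton (μ := μ.restrict t) Finset.univ fun x _ => hfib x

variable [Fintype E] [Fintype F] [Fintype G]

lemma entH_comp_of_injective (X : Ω → E) {φ : E → F} (hφ : φ.Injective) :
    entH μ (fun ω => φ (X ω)) = entH μ X := by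
  refine (Fintype.sum_of_injective φ hφ _ _ (fun y hy => ?_) fun x => ?_).symm
  · have hempty : (fun ω => φ (X ω)) ⁻¹' {y} = ∅ :=
      Set.eq_empty_of_forall_notMem fun ω hω => hy ⟨X ω, hω⟩
    simp [hempty]
  · have hfib : (fun ω => φ (X ω)) ⁻¹' {φ x} = X ⁻¹' {x} := by
      ext ω; exact hφ.eq_iff
    rw [hfib]

lemma entH_const [IsProbabilityMeasure μ] (c : E) : entH μ (fun _ => c) = 0 := by
  classical
  refine Finset.sum_eq_zero fun x _ => ?_
  by_cases h : c = x <;> simp [h]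

lemma entH_prodMk (X : Ω → E) (Y : Ω → F) :
    entH μ (fun ω => (X ω, Y ω)) =
      ∑ y, ∑ x, Real.negMulLog (μ.real (X ⁻¹' {x} ∩ Y ⁻¹' {y})) := by
  simp only [entH, Fintype.sum_prod_type_right, prodMk_preimage_singleton, measureReal_def]

lemma condMutInf_self (X : Ω → E) (Y : Ω → F) : condMutInf μ X X Y = condEnt μ X Y := by
  have hinj : Function.Injective fun v : E × F => (v.1, v.1, v.2) :=
    Function.HasLeftInverse.injective ⟨fun v => (v.1, v.2.2), fun _ => rfl⟩
  have hdup := entH_comp_of_injective (μ := μ) (fun ω => (X ω, Y ω)) hinj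
  unfold condMutInf condEnt
  linarith

lemma condMutInf_const [IsProbabilityMeasure μ] (X : Ω → E) (Y : Ω → F) (c : G) :
    condMutInf μ X Y (fun _ => c) = mutInf μ X Y := by
  have hX := entH_comp_of_injective (μ := μ) X (Prod.mk_left_injective c)
  have hY := entH_comp_of_injective (μ := μ) Y (Prod.mk_left_injective c)
  have hinj : Function.Injective fun v : E × F => (v.1, v.2, c) :=
    Function.HasLeftInverse.injective ⟨fun v => (v.1, v.2.1), fun _ => rfl⟩
  have hXY := entH_comp_of_injective (μ := μ) (fun ω => (X ω, Y ω)) hinj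
  rw [condMutInf, mutInf, hX, hY, hXY, entH_const, sub_zero]

lemma mutInf_prodMk_right (X : Ω → E) (Y : Ω → F) (Z : Ω → G) :
    mutInf μ X (fun ω => (Y ω, Z ω)) = mutInf μ X Z + condMutInf μ X Y Z := by
  unfold mutInf condMutInf
  ring

variable [MeasurableSpace E] [MeasurableSingletonClass E]

lemma mutInf_eq_zero_of_indepFun [MeasurableSpace F] [MeasurableSingletonClass F]
    [IsProbabilityMeasure μ] {X : Ω → E} {Y : Ω → F} (hX : Measurable X) (hY : Measurable Y)
    (hindep : IndepFun X Y μ) : mutInf μ X Y = 0 := by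
  have joint (x : E) (y : F) :
      μ.real (X ⁻¹' {x} ∩ Y ⁻¹' {y}) = μ.real (X ⁻¹' {x}) * μ.real (Y ⁻¹' {y}) := by
    simp only [measureReal_def, ← ENNReal.toReal_mul, hindep.measure_inter_preimage_eq_mul _ _
      (measurableSet_singleton x) (measurableSet_singleton y)]
  have sumX : ∑ x, μ.real (X ⁻¹' {x}) = 1 := by
    simpa using sum_measureReal_preimage_singleton_inter (μ := μ) hX Set.univ
  have sumY : ∑ y, μ.real (Y ⁻¹' {y}) = 1 := by
    simpa using sum_measureReal_preimage_singleton_inter (μ := μ) hY Set.univ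
  have additive : entH μ (fun ω => (X ω, Y ω)) = entH μ X + entH μ Y := by
    rw [entH_prodMk]
    simp only [joint, Real.negMulLog_mul, Finset.sum_add_distrib, ← Finset.mul_sum,
      ← Finset.sum_mul, sumX, sumY, one_mul]
    rfl
  rw [mutInf, additive, sub_self]

section FiniteMeasure

variable [IsFiniteMeasure μ]

theorem condMutInf_nonneg_s11 [MeasurableSpace F] [MeasurableSingletonClass F] {X : Ω → E}
    {Y : Ω → F} (hX : Measurable X) (hY : Measurable Y) (Z : Ω → G) :
    0 ≤ condMutInf μ X Y Z := by
  let p (z : G) (y : F) (x : E) : ℝ := μ.real (X ⁻¹' {x} ∩ (Y ⁻¹' {y} ∩ Z ⁻¹' {z}))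
  have sum_x (z : G) (y : F) : ∑ x, p z y x = μ.real (Y ⁻¹' {y} ∩ Z ⁻¹' {z}) :=
    sum_measureReal_preimage_singleton_inter hX _
  have sum_y (z : G) (x : E) : ∑ y, p z y x = μ.real (X ⁻¹' {x} ∩ Z ⁻¹' {z}) := by
    simp only [p, Set.inter_left_comm (X ⁻¹' {x})]
    exact sum_measureReal_preimage_singleton_inter hY _
  have sum_yx (z : G) : ∑ y, μ.real (Y ⁻¹' {y} ∩ Z ⁻¹' {z}) = μ.real (Z ⁻¹' {z}) :=
    sum_measureReal_preimage_singleton_inter hY _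
  have fibrewise :
      ∑ z, (∑ y, ∑ x, Real.negMulLog (p z y x) + Real.negMulLog (∑ y, ∑ x, p z y x)) ≤
        ∑ z, (∑ y, Real.negMulLog (∑ x, p z y x) + ∑ x, Real.negMulLog (∑ y, p z y x)) :=
    Finset.sum_le_sum fun z _ => sum_negMulLog_add_negMulLog_sum_le fun _ _ => measureReal_nonneg
  have hZ : entH μ Z = ∑ z, Real.negMulLog (μ.real (Z ⁻¹' {z})) := rfl
  have hXYZ : entH μ (fun ω => (X ω, Y ω, Z ω)) = ∑ z, ∑ y, ∑ x, Real.negMulLog (p z y x) := by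
    simp only [entH_prodMk, Fintype.sum_prod_type_right, prodMk_preimage_singleton, p]
  simp only [Finset.sum_add_distrib, sum_x, sum_y, sum_yx, ← entH_prodMk, ← hZ, ← hXYZ] at fibrewise
  unfold condMutInf
  linarith

lemma condEnt_nonneg {X : Ω → E} (hX : Measurable X) (Y : Ω → F) : 0 ≤ condEnt μ X Y :=
  condMutInf_self (μ := μ) X Y ▸ condMutInf_nonneg_s11 hX hX Y

lemma condMutInf_le_condEnt (X : Ω → F) {Y : Ω → E} (hY : Measurable Y) (Z : Ω → G) :
    condMutInf μ X Y Z ≤ condEnt μ Y Z := by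
  have hinj : Function.Injective fun v : F × E × G => (v.2.1, v.1, v.2.2) :=
    Function.HasLeftInverse.injective ⟨fun v => (v.2.1, v.1, v.2.2), fun _ => rfl⟩
  have hswap := entH_comp_of_injective (μ := μ) (fun ω => (X ω, Y ω, Z ω)) hinj
  have hcond := condEnt_nonneg (μ := μ) hY fun ω => (X ω, Z ω)
  unfold condEnt at hcond
  unfold condMutInf condEnt
  linarith

-- The difference of the two sides is `I(X : A | (g(Z, A), Z))`.
lemma mutInf_comp_prodMk_le [MeasurableSpace F] [MeasurableSingletonClass F] {H : Type*}
    [Fintype H] {X : Ω → E} {A : Ω → F} (hX : Measurable X) (hA : Measurable A) (Z : Ω → G)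
    (g : G → F → H) :
    mutInf μ X (fun ω => (g (Z ω) (A ω), Z ω)) ≤ mutInf μ X (fun ω => (Z ω, A ω)) := by
  have hinj : Function.Injective fun v : G × F => (v.2, g v.1 v.2, v.1) :=
    Function.HasLeftInverse.injective ⟨fun v => (v.2.2, v.1), fun _ => rfl⟩
  have hinjX : Function.Injective fun v : E × G × F => (v.1, v.2.2, g v.2.1 v.2.2, v.2.1) :=
    Function.HasLeftInverse.injective ⟨fun v => (v.1, v.2.2.2, v.2.1), fun _ => rfl⟩
  have hAYZ := entH_comp_of_injective (μ := μ) (fun ω => (Z ω, A ω)) hinj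
  have hXAYZ := entH_comp_of_injective (μ := μ) (fun ω => (X ω, Z ω, A ω)) hinjX
  have hcond := condMutInf_nonneg_s11 (μ := μ) hX hA fun ω => (g (Z ω) (A ω), Z ω)
  unfold condMutInf at hcond
  unfold mutInf
  linarith

end FiniteMeasure

section ProbabilityMeasure

variable [MeasurableSpace F] [MeasurableSingletonClass F] [IsProbabilityMeasure μ]
  {X : Ω → E} {Y : Ω → F}

lemma mutInf_nonneg (hX : Measurable X) (hY : Measurable Y) : 0 ≤ mutInf μ X Y :=
  condMutInf_const (μ := μ) X Y () ▸ condMutInf_nonneg_s11 hX hY _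

lemma condEnt_le_entH (hX : Measurable X) (hY : Measurable Y) : condEnt μ X Y ≤ entH μ X := by
  have h := mutInf_nonneg (μ := μ) hX hY
  unfold mutInf at h
  unfold condEnt
  linarith

lemma mutInf_prodMk_le_entH_of_indepFun {S : Type*} [Finite S] [MeasurableSpace S]
    [MeasurableSingletonClass S] {A : Ω → S} {Z : Ω → F} (hX : Measurable X) (hA : Measurable A)
    (hZ : Measurable Z) (hindep : IndepFun X A μ) (g : F → S → G) :
    mutInf μ X (fun ω => (g (Z ω) (A ω), Z ω)) ≤ entH μ Z := by
  have := Fintype.ofFinite S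
  calc mutInf μ X (fun ω => (g (Z ω) (A ω), Z ω))
      ≤ mutInf μ X (fun ω => (Z ω, A ω)) := mutInf_comp_prodMk_le hX hA Z g
    _ = mutInf μ X A + condMutInf μ X Z A := mutInf_prodMk_right X Z A
    _ = condMutInf μ X Z A := by rw [mutInf_eq_zero_of_indepFun hX hA hindep, zero_add]
    _ ≤ condEnt μ Z A := condMutInf_le_condEnt X hZ A
    _ ≤ entH μ Z := condEnt_le_entH hZ hA

end ProbabilityMeasure

end ShannonInequalities

theorem instrumental_entropy_inequality_general {Ω EX EA EZ EY : Type*} [MeasurableSpace Ω]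
    [Fintype EX] [Fintype EZ] [Fintype EY]
    [MeasurableSpace EX] [MeasurableSingletonClass EX] [MeasurableSpace EA]
    [MeasurableSpace EZ] [MeasurableSingletonClass EZ]
    [MeasurableSpace EY] [MeasurableSingletonClass EY]
    (μ : Measure Ω) [IsProbabilityMeasure μ]
    (X : Ω → EX) (A : Ω → EA) (Z : Ω → EZ) (Y : Ω → EY)
    (hX : Measurable X) (hA : Measurable A) (hZ : Measurable Z)
    (hindep : IndepFun X A μ)
    (g : EZ → EA → EY) (hg : ∀ z, Measurable (g z)) (hY : ∀ ω, Y ω = g (Z ω) (A ω)) :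
    mutInf μ X (fun ω => (Y ω, Z ω)) ≤ entH μ Z := by
  classical
  obtain rfl : Y = fun ω => g (Z ω) (A ω) := funext hY
  -- `A` matters only through the finite-valued response function `g(·, A)`.
  let response : EA → EZ → EY := fun a z => g z a
  have hresponse : Measurable response := measurable_pi_iff.2 hg
  exact mutInf_prodMk_le_entH_of_indepFun hX (hresponse.comp hA) hZ
    (hindep.comp measurable_id hresponse) fun z r => r z

/-- **Entropy inequality for the classical instrumental scenario**: if `X` and `A`
are independent finite random variables, `Z = f (X, A)` and `Y = g (Z, A)`, then
`I(X : (Y, Z)) ≤ H(Z)`. -/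
theorem instrumental_entropy_inequality {Ω EX EA EZ EY : Type*} [MeasurableSpace Ω]
    [Fintype EX] [Fintype EA] [Fintype EZ] [Fintype EY]
    [MeasurableSpace EX] [MeasurableSingletonClass EX]
    [MeasurableSpace EA] [MeasurableSingletonClass EA]
    (μ : Measure Ω) [IsProbabilityMeasure μ]
    (X : Ω → EX) (A : Ω → EA) (hX : Measurable X) (hA : Measurable A)
    (hindep : IndepFun X A μ)
    (f : EX → EA → EZ) (g : EZ → EA → EY)
    (Z : Ω → EZ) (Y : Ω → EY)
    (hZ : ∀ ω, Z ω = f (X ω) (A ω)) (hY : ∀ ω, Y ω = g (Z ω) (A ω)) :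
    mutInf μ X (fun ω => (Y ω, Z ω)) ≤ entH μ Z := by
  let _ : MeasurableSpace EZ := ⊤
  let _ : MeasurableSpace EY := ⊤
  have hZ_meas : Measurable Z :=
    funext hZ ▸ (Measurable.of_discrete (f := fun v : EX × EA => f v.1 v.2)).comp (hX.prodMk hA)
  exact instrumental_entropy_inequality_general μ X A Z Y hX hA hZ_meas hindep g
    (fun _ => .of_discrete) hY
end
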